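/- Let k, m, n be positive integers with k+m ≤ n. For all w, w′ ∈ Sₙ, the structure constant c^{w′}_{w, r[k,m]} equals 1 if w →_{r[k,m]} w′, and equals 0 otherwise. -/

import Mathlib

open Equiv MvPolynomial

attribute [local instance] Classical.propDecidable

namespace SchubertPieri

/-- Position `j ∈ {1,…,N}` (1-indexed) as an element of `Fin N` (0-indexed). -/
def pos (N : ℕ) [NeZero N] (j : ℕ) : Fin N :=
  ⟨(j - 1) % N, Nat.mod_lt _ (Nat.pos_of_ne_zero (NeZero.ne N))⟩

/-- The transposition `t_{a,b}` interchanging positions `a` and `b` (1-indexed). -/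
def t (N : ℕ) [NeZero N] (a b : ℕ) : Equiv.Perm (Fin N) :=
  Equiv.swap (pos N a) (pos N b)

/-- The value `w(j)` for `j ∈ {1,…,N}` (1-indexed). -/
def val {N : ℕ} [NeZero N] (w : Equiv.Perm (Fin N)) (j : ℕ) : ℕ :=
  (w (pos N j) : ℕ) + 1

/-- The length of `w`: its number of inversions. -/
def len {N : ℕ} (w : Equiv.Perm (Fin N)) : ℕ :=
  (Finset.univ.filter fun p : Fin N × Fin N => p.1 < p.2 ∧ w p.2 < w p.1).card

/-- The longest permutation `w₀ : j ↦ N+1-j`. -/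
def w0 (N : ℕ) : Equiv.Perm (Fin N) :=
  ⟨Fin.rev, Fin.rev, Fin.rev_rev, Fin.rev_rev⟩

/-- The product `t_{a 0, b 0} ⋯ t_{a (i-1), b (i-1)}`. -/
def tProd (N : ℕ) [NeZero N] (a b : ℕ → ℕ) (i : ℕ) : Equiv.Perm (Fin N) :=
  ((List.range i).map fun j => t N (a j) (b j)).prod

/-- `r[k,m] = t_{k,k+1} t_{k,k+2} ⋯ t_{k,k+m}`, the (m+1)-cycle with
`r[k,m](k) = k+m` and `r[k,m](j) = j-1` for `k+1 ≤ j ≤ k+m`. -/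
def rPerm (N k m : ℕ) [NeZero N] : Equiv.Perm (Fin N) :=
  ((List.range m).map fun i => t N k (k + 1 + i)).prod

/-- `c[k,m] = t_{k,k+1} t_{k-1,k+1} ⋯ t_{k-m+1,k+1}`, the (m+1)-cycle with
`c[k,m](j) = j+1` for `k-m+1 ≤ j ≤ k` and `c[k,m](k+1) = k-m+1`. -/
def cPerm (N k m : ℕ) [NeZero N] : Equiv.Perm (Fin N) :=
  ((List.range m).map fun i => t N (k - i) (k + 1)).prod

/-- The conditions that `aᵢ ≤ k < bᵢ` (with all indices in `{1,…,N}`) and that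
`ℓ(w t_{a₁ b₁} ⋯ t_{aᵢ bᵢ}) = ℓ(w) + i` for `1 ≤ i ≤ m`. -/
def StepOK (N k m : ℕ) [NeZero N] (w : Equiv.Perm (Fin N)) (a b : ℕ → ℕ) : Prop :=
  (∀ i, i < m → 1 ≤ a i ∧ a i ≤ k ∧ k < b i ∧ b i ≤ N) ∧
  (∀ i, i ≤ m → len (w * tProd N a b i) = len w + i)

/-- `w →_{r[k,m]} w'`. -/
def RelR (N k m : ℕ) [NeZero N] (w w' : Equiv.Perm (Fin N)) : Prop :=
  ∃ a b : ℕ → ℕ, StepOK N k m w a b ∧ w' = w * tProd N a b m ∧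
    (∀ i j, i < m → j < m → i ≠ j → b i ≠ b j)

/-- `w →_{c[k,m]} w'`. -/
def RelC (N k m : ℕ) [NeZero N] (w w' : Equiv.Perm (Fin N)) : Prop :=
  ∃ a b : ℕ → ℕ, StepOK N k m w a b ∧ w' = w * tProd N a b m ∧
    (∀ i j, i < m → j < m → i ≠ j → a i ≠ a j)

/-- The divided difference operator `∂ᵢ f = (f - sᵢ·f)/(xᵢ - xᵢ₊₁)` (1-indexed `i`);
the quotient is exact, and is recovered here as the (unique) witness of divisibility. -/
noncomputable def divDiff {N : ℕ} [NeZero N] (i : ℕ) (f : MvPolynomial (Fin N) ℤ) :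
    MvPolynomial (Fin N) ℤ :=
  if h : (X (pos N i) - X (pos N (i + 1))) ∣ (f - rename (⇑(t N i (i + 1))) f) then
    h.choose
  else 0

/-- `∂_{a₁} ∘ ⋯ ∘ ∂_{a_p}` applied to `f`, for a word `l = [a₁,…,a_p]`. -/
noncomputable def divDiffWord {N : ℕ} [NeZero N] (l : List ℕ) (f : MvPolynomial (Fin N) ℤ) :
    MvPolynomial (Fin N) ℤ :=
  l.foldr divDiff f

/-- Auxiliary: produce a reduced word for `w` by repeatedly removing a descent. -/
def redWordAux (N : ℕ) [NeZero N] : ℕ → Equiv.Perm (Fin N) → List ℕ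
  | 0, _ => []
  | fuel + 1, w =>
    match ((List.range (N - 1)).map (· + 1)).find? (fun i => decide (val w (i + 1) < val w i)) with
    | none => []
    | some i => redWordAux N fuel (w * t N i (i + 1)) ++ [i]

/-- A canonical reduced word `(a₁,…,a_p)` for `w`, i.e. `w = s_{a₁} ⋯ s_{a_p}` with `p = ℓ(w)`. -/
def redWord (N : ℕ) [NeZero N] (w : Equiv.Perm (Fin N)) : List ℕ :=
  redWordAux N (N * N) w

/-- The staircase monomial `x₁^{N-1} x₂^{N-2} ⋯ x_{N-1}`. -/
noncomputable def staircase (N : ℕ) : MvPolynomial (Fin N) ℤ :=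
  ∏ i : Fin N, X i ^ (N - 1 - (i : ℕ))

/-- The Schubert polynomial `𝔖_w = ∂_{w⁻¹w₀}(x₁^{N-1} ⋯ x_{N-1})`. -/
noncomputable def schubertPoly (N : ℕ) [NeZero N] (w : Equiv.Perm (Fin N)) :
    MvPolynomial (Fin N) ℤ :=
  divDiffWord (redWord N (w⁻¹ * w0 N)) (staircase N)

/-- The ideal of `Rₙ` generated by the symmetric polynomials with zero constant term. -/
noncomputable def symIdeal (N : ℕ) : Ideal (MvPolynomial (Fin N) ℤ) :=
  Ideal.span {f : MvPolynomial (Fin N) ℤ | f.IsSymmetric ∧ constantCoeff f = 0}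

/-- The ring `Hₙ = Rₙ/𝒮`. -/
abbrev HRing (N : ℕ) := MvPolynomial (Fin N) ℤ ⧸ symIdeal N

/-- The class of the Schubert polynomial `𝔖_w` in `Hₙ`. -/
noncomputable def SS (N : ℕ) [NeZero N] (w : Equiv.Perm (Fin N)) : HRing N :=
  Ideal.Quotient.mk (symIdeal N) (schubertPoly N w)

/-- The complete homogeneous symmetric polynomial of degree `m` in `x₁,…,x_k`. -/
noncomputable def hPoly (N k m : ℕ) : MvPolynomial (Fin N) ℤ :=
  ∑ s ∈ (Finset.univ.filter fun i : Fin N => (i : ℕ) < k).sym m,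
    (Multiset.map X (s : Multiset (Fin N))).prod

/-- The elementary symmetric polynomial of degree `m` in `x₁,…,x_k`. -/
noncomputable def ePoly (N k m : ℕ) : MvPolynomial (Fin N) ℤ :=
  ∑ s ∈ (Finset.univ.filter fun i : Fin N => (i : ℕ) < k).powersetCard m, ∏ i ∈ s, X i

/-- Covering relation of the `k`-Bruhat order. -/
def kCover (N k : ℕ) [NeZero N] (w w' : Equiv.Perm (Fin N)) : Prop :=
  ∃ a b : ℕ, 1 ≤ a ∧ a ≤ k ∧ k < b ∧ b ≤ N ∧ w' = w * t N a b ∧ len w' = len w + 1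

/-- The (strict) `k`-Bruhat order `<ₖ`. -/
def kBruhat (N k : ℕ) [NeZero N] : Equiv.Perm (Fin N) → Equiv.Perm (Fin N) → Prop :=
  Relation.TransGen (kCover N k)

/-- The label `w⁽ⁱ⁺¹⁾(a_{i+1})` (0-indexed `i`) of the `(i+1)`-st step of a path. -/
def label {N : ℕ} [NeZero N] (w : Equiv.Perm (Fin N)) (a b : ℕ → ℕ) (i : ℕ) : ℕ :=
  val (w * tProd N a b (i + 1)) (a i)

/-- `(a,b)` encodes a path of length `m` in the `k`-Bruhat order from `w` to `w'`
(normalized so that `a i = b i = 0` for `i ≥ m`, making the encoding unique). -/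
def PathWit (N k m : ℕ) [NeZero N] (w w' : Equiv.Perm (Fin N))
    (ab : (ℕ → ℕ) × (ℕ → ℕ)) : Prop :=
  StepOK N k m w ab.1 ab.2 ∧ w' = w * tProd N ab.1 ab.2 m ∧
    ∀ i, m ≤ i → ab.1 i = 0 ∧ ab.2 i = 0

/-- Paths of length `m` in the `k`-Bruhat order from `w` to `w'` with strictly
increasing labels. -/
def IncPaths (N k m : ℕ) [NeZero N] (w w' : Equiv.Perm (Fin N)) :
    Set ((ℕ → ℕ) × (ℕ → ℕ)) :=
  {ab | PathWit N k m w w' ab ∧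
    ∀ i j, i < j → j < m → label w ab.1 ab.2 i < label w ab.1 ab.2 j}

/-- Paths of length `m` in the `k`-Bruhat order from `w` to `w'` with strictly
decreasing labels. -/
def DecPaths (N k m : ℕ) [NeZero N] (w w' : Equiv.Perm (Fin N)) :
    Set ((ℕ → ℕ) × (ℕ → ℕ)) :=
  {ab | PathWit N k m w w' ab ∧
    ∀ i j, i < j → j < m → label w ab.1 ab.2 j < label w ab.1 ab.2 i}


/-- The cycle `(x₁ x₂ … x_r)` (sending `x₁ ↦ x₂ ↦ ⋯ ↦ x_r ↦ x₁`), as a product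
of transpositions. -/
def cycleList (N : ℕ) [NeZero N] (l : List ℕ) : Equiv.Perm (Fin N) :=
  ((l.zip l.tail).map fun p => t N p.1 p.2).prod

/-- The Grassmannian permutation `h[k;p,q]` of descent `k` and hook shape `(p,1^{q-1})`:
the `(p+q)`-cycle `(k-q+1  k-q+2 … k  k+p  k+p-1 … k+1)`. -/
def hookPerm (N k p q : ℕ) [NeZero N] : Equiv.Perm (Fin N) :=
  cycleList N (((List.range q).map fun i => k - q + 1 + i) ++
    ((List.range p).reverse.map fun i => k + 1 + i))

/-- `w|ₚ ∈ S_{N-1}`: delete row `p` and column `w(p)` from the permutation matrix of `w`. -/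
def drop {N : ℕ} (w : Equiv.Perm (Fin (N + 1))) (p : Fin (N + 1)) : Equiv.Perm (Fin N) :=
  Equiv.removeNone (((finSuccEquiv' p).symm.trans (w : Fin (N + 1) ≃ Fin (N + 1))).trans
    (finSuccEquiv' (w p)))

/-- `lam` is a partition with at most `k` parts (1-indexed parts `lam 1 ≥ lam 2 ≥ ⋯`,
normalized by `lam 0 = 0`). -/
def IsPartFun (k : ℕ) (lam : ℕ → ℕ) : Prop :=
  lam 0 = 0 ∧ (∀ j, 1 ≤ j → lam (j + 1) ≤ lam j) ∧ ∀ j, k < j → lam j = 0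

/-- `h_d(x₁,…,x_k)` for an integer `d`, with `h_d = 0` for `d < 0`. -/
noncomputable def hPolyZ (N k : ℕ) (d : ℤ) : MvPolynomial (Fin N) ℤ :=
  if 0 ≤ d then hPoly N k d.toNat else 0

/-- The Schur polynomial `s_λ(x₁,…,x_k)`, via the Jacobi–Trudi determinant
`det(h_{λᵢ+j-i})_{1 ≤ i,j ≤ k}`. -/
noncomputable def schurPoly (N k : ℕ) (lam : ℕ → ℕ) : MvPolynomial (Fin N) ℤ :=
  (Matrix.of fun i j : Fin k =>
    hPolyZ N k ((lam ((i : ℕ) + 1) : ℤ) + (j : ℕ) - (i : ℕ))).det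

/-- `r_j = #{i : aᵢ = j}` (with `i` ranging over `0,…,m-1`, 0-indexed). -/
def rJ (a : ℕ → ℕ) (m j : ℕ) : ℕ := ((Finset.range m).filter fun i => a i = j).card

/-- `μ_j = r_{j+1} + ⋯ + r_k`. -/
def muJ (a : ℕ → ℕ) (m k j : ℕ) : ℕ :=
  if j = 0 then 0 else ∑ j' ∈ Finset.Icc (j + 1) k, rJ a m j'

/-- `λ_j = μ_j + r_j`. -/
def lamJ (a : ℕ → ℕ) (m k j : ℕ) : ℕ :=
  if j = 0 then 0 else muJ a m k j + rJ a m j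

/-- `d_j = #{i : bᵢ = N+1-j}` (with `i` ranging over `0,…,m-1`, 0-indexed). -/
def dJ (b : ℕ → ℕ) (m N j : ℕ) : ℕ :=
  ((Finset.range m).filter fun i => b i = N + 1 - j).card

/-- `μ′_j = d_{j+1} + ⋯ + d_{N-k}`. -/
def muJ' (b : ℕ → ℕ) (m N k j : ℕ) : ℕ :=
  if j = 0 then 0 else ∑ j' ∈ Finset.Icc (j + 1) (N - k), dJ b m N j'

/-- `λ′_j = μ′_j + d_j`. -/
def lamJ' (b : ℕ → ℕ) (m N k j : ℕ) : ℕ :=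
  if j = 0 then 0 else muJ' b m N k j + dJ b m N j

/-- The conjugate (transpose) partition: `νᵗ_j = #{i : νᵢ ≥ j}`, for `ν` with at
most `k` parts. -/
def conjPart (k : ℕ) (nu : ℕ → ℕ) (j : ℕ) : ℕ :=
  if j = 0 then 0 else ((Finset.Icc 1 k).filter fun i => j ≤ nu i).card

/-- `wv` is the Grassmannian permutation of descent `k` and shape `nu`:
`wv(j) = j + ν_{k+1-j}` for `1 ≤ j ≤ k`, and `wv` is increasing on `{k+1,…,N}`. -/
def IsGrassOf (N k : ℕ) [NeZero N] (nu : ℕ → ℕ) (wv : Equiv.Perm (Fin N)) : Prop :=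
  (∀ j, 1 ≤ j → j ≤ k → val wv j = j + nu (k + 1 - j)) ∧
  (∀ j, k < j → j < N → val wv j < val wv (j + 1))

/-- Paths of length `m` in the `k`-Bruhat order from `w` to `w'` whose labels
increase strictly for the first `p` steps and decrease strictly thereafter
(positions `p, p+1, …, m` being decreasing, 1-indexed). -/
def IncDecPaths (N k m p : ℕ) [NeZero N] (w w' : Equiv.Perm (Fin N)) :
    Set ((ℕ → ℕ) × (ℕ → ℕ)) :=
  {ab | PathWit N k m w w' ab ∧
    (∀ i j, i < j → j < p → label w ab.1 ab.2 i < label w ab.1 ab.2 j) ∧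
    (∀ i j, p - 1 ≤ i → i < j → j < m → label w ab.1 ab.2 j < label w ab.1 ab.2 i)}

/-- Paths of length `m` in the `k`-Bruhat order from `w` to `w'` whose labels
decrease strictly for the first `q` steps and increase strictly thereafter. -/
def DecIncPaths (N k m q : ℕ) [NeZero N] (w w' : Equiv.Perm (Fin N)) :
    Set ((ℕ → ℕ) × (ℕ → ℕ)) :=
  {ab | PathWit N k m w w' ab ∧
    (∀ i j, i < j → j < q → label w ab.1 ab.2 j < label w ab.1 ab.2 i) ∧
    (∀ i j, q - 1 ≤ i → i < j → j < m → label w ab.1 ab.2 i < label w ab.1 ab.2 j)}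



def invF {N : ℕ} (w : Equiv.Perm (Fin N)) (i j : Fin N) : ℕ := if i < j ∧ w j < w i then 1 else 0

theorem len_eq_sum {N : ℕ} (w : Equiv.Perm (Fin N)) : len w = ∑ i, ∑ j, invF w i j := by
  unfold len invF
  rw [Finset.card_filter, Fintype.sum_prod_type]

theorem sum_split {N : ℕ} {a b : Fin N} (hab : a ≠ b) (f : Fin N → ℕ) :
    ∑ i, f i = f a + f b + ∑ i ∈ (Finset.univ.erase a).erase b, f i := by
  rw [← Finset.add_sum_erase _ _ (Finset.mem_univ a), ← Finset.add_sum_erase (Finset.univ.erase a) f (a := b), add_assoc]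
  simp [hab.symm]

theorem len_swap {N : ℕ} (w : Equiv.Perm (Fin N)) {a b : Fin N} (hab : a < b) (hw : w a < w b) :
    len (w * swap a b) = len w + 1 +
      2 * ∑ i ∈ (Finset.univ.erase a).erase b, (if a < i ∧ i < b ∧ w a < w i ∧ w i < w b then 1 else 0) := by
  have hne : a ≠ b := hab.ne
  set S := ((Finset.univ : Finset (Fin N)).erase a).erase b with hS
  have hmem : ∀ i ∈ S, i ≠ a ∧ i ≠ b := by
    intro i hi; simp [hS] at hi; tauto
  have key : ∀ v : Equiv.Perm (Fin N), len v =
      (invF v a a + invF v a b + invF v b a + invF v b b) +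
      (∑ i ∈ S, (invF v a i + invF v b i + invF v i a + invF v i b)) +
      ∑ i ∈ S, ∑ j ∈ S, invF v i j := by
    intro v
    rw [len_eq_sum, sum_split hne]
    simp only [sum_split hne (invF v _), Finset.sum_add_distrib]
    simp only [← hS]
    ring
  rw [key, key w, Finset.mul_sum]
  have h1 : ∑ i ∈ S, ∑ j ∈ S, invF (w * swap a b) i j = ∑ i ∈ S, ∑ j ∈ S, invF w i j := by
    refine Finset.sum_congr rfl fun i hi => Finset.sum_congr rfl fun j hj => ?_
    simp [invF, swap_apply_of_ne_of_ne (hmem i hi).1 (hmem i hi).2,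
      swap_apply_of_ne_of_ne (hmem j hj).1 (hmem j hj).2]
  have h2 : ∑ i ∈ S, (invF (w * swap a b) a i + invF (w * swap a b) b i +
      invF (w * swap a b) i a + invF (w * swap a b) i b) =
      ∑ i ∈ S, (invF w a i + invF w b i + invF w i a + invF w i b) +
      ∑ i ∈ S, 2 * (if a < i ∧ i < b ∧ w a < w i ∧ w i < w b then 1 else 0) := by
    rw [← Finset.sum_add_distrib]
    refine Finset.sum_congr rfl fun i hi => ?_
    obtain ⟨hia, hib⟩ := hmem i hi
    have e1 : w i ≠ w a := fun h => hia (w.injective h)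
    have e2 : w i ≠ w b := fun h => hib (w.injective h)
    simp only [invF, Perm.mul_apply, swap_apply_of_ne_of_ne hia hib, swap_apply_left, swap_apply_right]
    simp only [Fin.lt_def, ne_eq, Fin.ext_iff] at *
    split_ifs <;> omega
  have h3 : invF (w * swap a b) a a + invF (w * swap a b) a b + invF (w * swap a b) b a + invF (w * swap a b) b b
    = invF w a a + invF w a b + invF w b a + invF w b b + 1 := by
    simp [invF, hab, hw, hab.not_gt, hw.not_gt]
  rw [h1, h2, h3]; ring

/-- cover condition -/
def Cov {N : ℕ} (w : Equiv.Perm (Fin N)) (a b : Fin N) : Prop :=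
  w a < w b ∧ ∀ i, a < i → i < b → w a < w i → w i < w b → False

theorem len_swap_gt {N : ℕ} (w : Equiv.Perm (Fin N)) {a b : Fin N} (hab : a < b) (hw : w b < w a) :
    len (w * swap a b) + 1 ≤ len w := by
  have := len_swap (w * swap a b) hab (by simpa using hw)
  rw [mul_assoc, swap_mul_self, mul_one] at this
  omega

theorem cov_iff {N : ℕ} (w : Equiv.Perm (Fin N)) {a b : Fin N} (hab : a < b) :
    len (w * swap a b) = len w + 1 ↔ Cov w a b := by
  rcases lt_trichotomy (w a) (w b) with h | h | h
  · rw [len_swap w hab h]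
    simp only [Cov, h, true_and]
    constructor
    · intro H i h1 h2 h3 h4
      have H' : ∑ i ∈ (Finset.univ.erase a).erase b, (if a < i ∧ i < b ∧ w a < w i ∧ w i < w b then 1 else 0) = 0 := by omega
      rw [Finset.sum_eq_zero_iff] at H'
      have := H' i (by simp [h1.ne', h2.ne])
      simp [h1, h2, h3, h4] at this
    · intro H
      have H' : ∑ i ∈ (Finset.univ.erase a).erase b, (if a < i ∧ i < b ∧ w a < w i ∧ w i < w b then 1 else 0) = 0 := by
        refine Finset.sum_eq_zero fun i _ => if_neg ?_
        rintro ⟨h1, h2, h3, h4⟩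
        exact H i h1 h2 h3 h4
      omega
  · exact absurd (w.injective h) hab.ne
  · have := len_swap_gt w hab h
    simp only [Cov, h.not_gt, false_and, iff_false]; omega

theorem len_adj_asc {N : ℕ} (w : Equiv.Perm (Fin N)) {a b : Fin N} (hab : a.val + 1 = b.val) (h : w a < w b) :
    len (w * swap a b) = len w + 1 := by
  have : a < b := by rw [Fin.lt_def]; omega
  rw [cov_iff w this]
  refine ⟨h, fun i h1 h2 => ?_⟩
  rw [Fin.lt_def] at h1 h2; omega

theorem len_adj_desc {N : ℕ} (w : Equiv.Perm (Fin N)) {a b : Fin N} (hab : a.val + 1 = b.val) (h : w b < w a) :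
    len (w * swap a b) + 1 = len w := by
  have := len_adj_asc (w * swap a b) hab (by simpa using h)
  rw [mul_assoc, swap_mul_self, mul_one] at this
  omega

theorem cov_down_iff {N : ℕ} (w : Equiv.Perm (Fin N)) {a b : Fin N} (hab : a < b) :
    len (w * swap a b) + 1 = len w ↔ Cov (w * swap a b) a b := by
  rw [← cov_iff _ hab, mul_assoc, swap_mul_self, mul_one]; exact eq_comm

theorem no_desc {N : ℕ} (w : Equiv.Perm (Fin N))
    (h : ∀ a b : Fin N, a.val + 1 = b.val → w a < w b) : w = 1 := by
  have hm : StrictMono w := by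
    rcases N with _ | N
    · intro a; exact a.elim0
    · rw [Fin.strictMono_iff_lt_succ]
      intro i
      apply h; simp
  have : ∀ i, w i = i := by
    have hid := hm.range_inj (g := id) strictMono_id
    have := hid.1 (by simp [w.surjective.range_eq])
    intro i; rw [this]; rfl
  ext i; simp [this]

theorem len_one {N : ℕ} : len (1 : Equiv.Perm (Fin N)) = 0 := by
  unfold len
  rw [Finset.card_eq_zero, Finset.filter_eq_empty_iff]
  rintro ⟨i, j⟩ _ ⟨h1, h2⟩
  exact absurd h1 h2.not_gt

theorem exists_desc {N : ℕ} (w : Equiv.Perm (Fin N)) (h : w ≠ 1) :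
    ∃ a b : Fin N, a.val + 1 = b.val ∧ w b < w a := by
  by_contra H
  push Not at H
  apply h
  apply no_desc
  intro a b hab
  refine lt_of_le_of_ne (H a b hab) fun e => ?_
  have := w.injective e
  rw [this] at hab; omega

theorem len_mul_le {N : ℕ} (u v : Equiv.Perm (Fin N)) : len (u * v) ≤ len u + len v := by
  induction h : len v using Nat.strong_induction_on generalizing v with
  | _ l ih =>
    by_cases hv : v = 1
    · subst hv; simp
    · obtain ⟨a, b, hab, hd⟩ := exists_desc v hv
      have h1 := len_adj_desc v hab hd
      have h2 := ih (len (v * swap a b)) (by omega) _ rfl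
      rcases lt_trichotomy ((u * (v * swap a b)) a) ((u * (v * swap a b)) b) with h3 | h3 | h3
      · have := len_adj_asc _ hab h3
        rw [← mul_assoc u, mul_assoc, swap_mul_self, mul_one] at this
        rw [← mul_assoc u] at h2
        omega
      · have := (u * (v * swap a b)).injective h3
        rw [this] at hab; omega
      · have := len_adj_desc _ hab h3
        rw [← mul_assoc u, mul_assoc, swap_mul_self, mul_one] at this
        rw [← mul_assoc u] at h2
        omega

theorem len_le_sq {N : ℕ} (w : Equiv.Perm (Fin N)) : len w ≤ N * N := by
  unfold len
  refine (Finset.card_filter_le _ _).trans ?_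
  simp

theorem len_inv {N : ℕ} (w : Equiv.Perm (Fin N)) : len w⁻¹ = len w := by
  unfold len
  refine Finset.card_bij' (fun p _ => (w⁻¹ p.2, w⁻¹ p.1)) (fun p _ => (w p.2, w p.1)) ?_ ?_ ?_ ?_ <;>
  · rintro ⟨i, j⟩ h
    simp at h ⊢
    try tauto

theorem len_mul_w0 {N : ℕ} (w : Equiv.Perm (Fin N)) : len (w * w0 N) + len w = len (w0 N) := by
  have e : len (w * w0 N) = (Finset.univ.filter fun p : Fin N × Fin N => p.1 < p.2 ∧ w p.1 < w p.2).card := by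
    unfold len
    refine Finset.card_bij' (fun p _ => (Fin.rev p.2, Fin.rev p.1)) (fun p _ => (Fin.rev p.2, Fin.rev p.1)) ?_ ?_ ?_ ?_ <;>
    · rintro ⟨i, j⟩ h
      simp only [Finset.mem_filter, Finset.mem_univ, true_and] at h ⊢
      simp [w0] at h ⊢
      try tauto
  have e0 : len (w0 N) = (Finset.univ.filter fun p : Fin N × Fin N => p.1 < p.2).card := by
    unfold len
    congr 1
    ext ⟨i, j⟩
    simp [w0]
  rw [e, e0]
  unfold len
  rw [← Finset.card_union_of_disjoint]
  · congr 1
    ext ⟨i, j⟩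
    simp only [Finset.mem_union, Finset.mem_filter, Finset.mem_univ, true_and]
    constructor
    · tauto
    · intro h
      rcases lt_trichotomy (w i) (w j) with h' | h' | h'
      · tauto
      · exact absurd (w.injective h') h.ne
      · tauto
  · rw [Finset.disjoint_filter]
    rintro ⟨i, j⟩ _ ⟨_, h⟩ ⟨_, h'⟩
    exact absurd h h'.not_gt


theorem pos_succ {N : ℕ} [NeZero N] (a : Fin N) : pos N (a.val + 1) = a := by
  apply Fin.ext; simp [pos, Nat.mod_eq_of_lt a.isLt]

theorem pos_succ2 {N : ℕ} [NeZero N] {a b : Fin N} (hab : a.val + 1 = b.val) :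
    pos N (a.val + 1 + 1) = b := by
  rw [hab, pos_succ]

theorem t_succ {N : ℕ} [NeZero N] {a b : Fin N} (hab : a.val + 1 = b.val) :
    t N (a.val + 1) (a.val + 1 + 1) = swap a b := by
  rw [t, pos_succ, pos_succ2 hab]

/-- divided difference at positions `a, a+1`. -/
noncomputable def dd {N : ℕ} [NeZero N] (a : Fin N) (f : MvPolynomial (Fin N) ℤ) : MvPolynomial (Fin N) ℤ :=
  divDiff (a.val + 1) f

theorem dvd_sub_rename {N : ℕ} (a b : Fin N) (f : MvPolynomial (Fin N) ℤ) :
    (X a - X b) ∣ f - rename (swap a b) f := by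
  induction f using MvPolynomial.induction_on with
  | C r => simp
  | add p q hp hq =>
    have : p + q - rename (swap a b) (p + q) = (p - rename (swap a b) p) + (q - rename (swap a b) q) := by
      rw [map_add]; ring
    rw [this]; exact dvd_add hp hq
  | mul_X p i hp =>
    have : p * X i - rename (swap a b) (p * X i) = (p - rename (swap a b) p) * X i +
      rename (swap a b) p * (X i - X (swap a b i)) := by
      rw [map_mul, rename_X]; ring
    rw [this]
    refine dvd_add (Dvd.dvd.mul_right hp _) (Dvd.dvd.mul_left ?_ _)
    by_cases h1 : i = a
    · subst h1; simp
    · by_cases h2 : i = b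
      · subst h2; rw [swap_apply_right]; exact ⟨-1, by ring⟩
      · rw [swap_apply_of_ne_of_ne h1 h2]; simp

theorem dd_spec {N : ℕ} [NeZero N] {a b : Fin N} (hab : a.val + 1 = b.val) (f : MvPolynomial (Fin N) ℤ) :
    (X a - X b) * dd a f = f - rename (swap a b) f := by
  have h : (X (pos N (a.val + 1)) - X (pos N (a.val + 1 + 1))) ∣
      (f - rename (⇑(t N (a.val + 1) (a.val + 1 + 1))) f) := by
    rw [t_succ hab, pos_succ, pos_succ2 hab]; exact dvd_sub_rename a b f
  have h2 := h.choose_spec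
  unfold dd divDiff
  rw [dif_pos h]
  generalize h.choose = g at h2
  rw [t_succ hab, pos_succ, pos_succ2 hab] at h2
  exact h2.symm

theorem X_sub_ne {N : ℕ} {a b : Fin N} (hab : a ≠ b) : (X a - X b : MvPolynomial (Fin N) ℤ) ≠ 0 := by
  rw [sub_ne_zero]; intro h; exact hab (MvPolynomial.X_injective h)

theorem adj_ne {N : ℕ} {a b : Fin N} (hab : a.val + 1 = b.val) : a ≠ b := by
  rintro rfl; omega

theorem dd_eq {N : ℕ} [NeZero N] {a b : Fin N} (hab : a.val + 1 = b.val) {f g : MvPolynomial (Fin N) ℤ}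
    (h : (X a - X b) * g = f - rename (swap a b) f) : dd a f = g := by
  apply mul_left_cancel₀ (X_sub_ne (adj_ne hab))
  rw [dd_spec hab, h]

theorem dd_add {N : ℕ} [NeZero N] {a b : Fin N} (hab : a.val + 1 = b.val) (f g : MvPolynomial (Fin N) ℤ) :
    dd a (f + g) = dd a f + dd a g := by
  apply dd_eq hab
  rw [mul_add, dd_spec hab, dd_spec hab, map_add]; ring

theorem dd_mul_sym {N : ℕ} [NeZero N] {a b : Fin N} (hab : a.val + 1 = b.val) (f g : MvPolynomial (Fin N) ℤ)
    (hs : rename (swap a b) g = g) :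
    dd a (g * f) = g * dd a f := by
  apply dd_eq hab
  rw [map_mul, hs]
  linear_combination g * dd_spec hab f

theorem dd_one {N : ℕ} [NeZero N] {a b : Fin N} (hab : a.val + 1 = b.val) :
    dd a (1 : MvPolynomial (Fin N) ℤ) = 0 := by
  apply dd_eq hab
  simp

theorem dd_mul_X {N : ℕ} [NeZero N] {a b : Fin N} (hab : a.val + 1 = b.val) (i : Fin N) (f : MvPolynomial (Fin N) ℤ) :
    dd a (X i * f) = X (swap a b i) * dd a f + (if i = a then f else if i = b then -f else 0) := by
  apply dd_eq hab
  have h := dd_spec hab f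
  rw [map_mul, rename_X]
  split_ifs with h1 h2
  · subst h1; rw [swap_apply_left]; linear_combination (X b) * h
  · subst h2; rw [swap_apply_right]; linear_combination (X a) * h
  · rw [swap_apply_of_ne_of_ne h1 h2]; linear_combination (X i) * h

theorem rename_dd {N : ℕ} [NeZero N] {a b : Fin N} (hab : a.val + 1 = b.val) (f : MvPolynomial (Fin N) ℤ) :
    rename (swap a b) (dd a f) = dd a f := by
  symm
  apply dd_eq hab
  have h := congrArg (rename (swap a b)) (dd_spec hab f)
  simp only [map_mul, map_sub, rename_X, swap_apply_left, swap_apply_right, rename_rename] at h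
  have e : (⇑(swap a b) ∘ ⇑(swap a b)) = id := by ext x; simp
  rw [e, rename_id_apply] at h
  linear_combination -h

theorem dd_dd {N : ℕ} [NeZero N] {a b : Fin N} (hab : a.val + 1 = b.val) (f : MvPolynomial (Fin N) ℤ) :
    dd a (dd a f) = 0 := by
  apply dd_eq hab
  rw [rename_dd hab]; ring

theorem dd_rename {N : ℕ} [NeZero N] {a b : Fin N} (hab : a.val + 1 = b.val) (σ : Perm (Fin N))
    (f : MvPolynomial (Fin N) ℤ) :
    (X (σ a) - X (σ b)) * rename σ (dd a f) = rename σ f - rename σ (rename (swap a b) f) := by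
  have h := congrArg (rename σ) (dd_spec hab f)
  simpa only [map_mul, map_sub, rename_X] using h

theorem swap_comm_disj {N : ℕ} {a b c d : Fin N} (hab : a ≠ b) (hcd : c ≠ d)
    (h1 : a ≠ c) (h2 : a ≠ d) (h3 : b ≠ c) (h4 : b ≠ d) :
    swap a b * swap c d = swap c d * swap a b := by
  apply (Equiv.Perm.disjoint_swap_swap _).commute
  simp [hab, hcd, h1, h2, h3, h4]

theorem dd_comm {N : ℕ} [NeZero N] {a b c d : Fin N} (hab : a.val + 1 = b.val) (hcd : c.val + 1 = d.val)
    (h1 : a ≠ c) (h2 : a ≠ d) (h3 : b ≠ c) (h4 : b ≠ d) (f : MvPolynomial (Fin N) ℤ) :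
    dd a (dd c f) = dd c (dd a f) := by
  apply dd_eq hab
  apply mul_left_cancel₀ (X_sub_ne (adj_ne hcd))
  have e1 := dd_spec hcd f
  have e2 := dd_spec hcd (dd a f)
  have e3 := dd_spec hab f
  have e4 := dd_rename hcd (swap a b) f
  have e5 := dd_rename hab (swap c d) f
  rw [swap_apply_of_ne_of_ne h1.symm h3.symm, swap_apply_of_ne_of_ne h2.symm h4.symm] at e4
  rw [swap_apply_of_ne_of_ne h1 h2, swap_apply_of_ne_of_ne h3 h4] at e5
  have hc : rename (swap a b) (rename (swap c d) f) = rename (swap c d) (rename (swap a b) f) := by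
    rw [rename_rename, rename_rename]
    congr 1
    have : swap a b * swap c d = swap c d * swap a b := swap_comm_disj (adj_ne hab) (adj_ne hcd) h1 h2 h3 h4
    congr 1
    exact congrArg (fun (p : Perm (Fin N)) => (p : Fin N → Fin N)) this
  linear_combination (X a - X b) * e2 + e3 - e5 - e1 + e4 - hc

theorem dd_braid {N : ℕ} [NeZero N] {a b c : Fin N} (hab : a.val + 1 = b.val) (hbc : b.val + 1 = c.val)
    (f : MvPolynomial (Fin N) ℤ) :
    dd a (dd b (dd a f)) = dd b (dd a (dd b f)) := by
  have nab := adj_ne hab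
  have nbc := adj_ne hbc
  have nac : a ≠ c := by rintro rfl; omega
  have hb : swap b c a = a := swap_apply_of_ne_of_ne nab nac
  have ha : swap a b c = c := swap_apply_of_ne_of_ne nac.symm nbc.symm
  have E1 : (X a - X b) * ((X b - X c) * ((X a - X c) * dd a (dd b (dd a f)))) =
      f - rename (swap a b) f - rename (swap b c) f + rename (swap b c) (rename (swap a b) f)
      + rename (swap a b) (rename (swap b c) f) -
        rename (swap a b) (rename (swap b c) (rename (swap a b) f)) := by
    have e1 := dd_spec hab f
    have e2 := dd_spec hbc (dd a f)
    have e3 := dd_spec hab (dd b (dd a f))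
    have e4 := dd_rename hbc (swap a b) (dd a f)
    have e5 := dd_rename hab (swap b c) f
    have e6 := congrArg (rename (swap a b)) e5
    rw [rename_dd hab] at e4
    simp only [map_mul, map_sub, rename_X, swap_apply_left, swap_apply_right, ha, hb] at e4 e5 e6
    linear_combination (X b - X c) * (X a - X c) * e3 + (X a - X c) * e2 - (X b - X c) * e4 + e1 - e5 + e6
  have E2 : (X a - X b) * ((X b - X c) * ((X a - X c) * dd b (dd a (dd b f)))) =
      f - rename (swap b c) f - rename (swap a b) f + rename (swap a b) (rename (swap b c) f)
      + rename (swap b c) (rename (swap a b) f) -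
        rename (swap b c) (rename (swap a b) (rename (swap b c) f)) := by
    have e1 := dd_spec hbc f
    have e2 := dd_spec hab (dd b f)
    have e3 := dd_spec hbc (dd a (dd b f))
    have e4 := dd_rename hab (swap b c) (dd b f)
    have e5 := dd_rename hbc (swap a b) f
    have e6 := congrArg (rename (swap b c)) e5
    rw [rename_dd hbc] at e4
    simp only [map_mul, map_sub, rename_X, swap_apply_left, swap_apply_right, ha, hb] at e4 e5 e6
    linear_combination (X a - X b) * (X a - X c) * e3 + (X a - X c) * e2 - (X a - X b) * e4 + e1 - e5 + e6
  have hc : rename (swap a b) (rename (swap b c) (rename (swap a b) f)) =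
      rename (swap b c) (rename (swap a b) (rename (swap b c) f)) := by
    simp only [rename_rename]
    congr 1
    congr 1
    ext x
    simp only [Function.comp_apply]
    by_cases h1 : x = a
    · subst h1; simp [ha, hb]
    by_cases h2 : x = b
    · subst h2; simp [ha, hb]
    by_cases h3 : x = c
    · subst h3; simp [ha, hb]
    rw [swap_apply_of_ne_of_ne h1 h2, swap_apply_of_ne_of_ne h2 h3, swap_apply_of_ne_of_ne h1 h2, swap_apply_of_ne_of_ne h2 h3]
  apply mul_left_cancel₀ (X_sub_ne nac)
  apply mul_left_cancel₀ (X_sub_ne nbc)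
  apply mul_left_cancel₀ (X_sub_ne nab)
  rw [E1, E2, hc]; ring


theorem find_some {N : ℕ} [NeZero N] (u : Perm (Fin N)) (i : ℕ)
    (h : ((List.range (N - 1)).map (· + 1)).find? (fun i => decide (val u (i + 1) < val u i)) = some i) :
    ∃ a b : Fin N, a.val + 1 = b.val ∧ u b < u a ∧ i = a.val + 1 := by
  have h1 := List.mem_of_find?_eq_some h
  have h2 := List.find?_some h
  simp only [decide_eq_true_eq] at h2
  simp only [List.mem_map, List.mem_range] at h1
  obtain ⟨j, hj, rfl⟩ := h1
  refine ⟨⟨j, by omega⟩, ⟨j + 1, by omega⟩, rfl, ?_, rfl⟩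
  simp only [val] at h2
  rw [show pos N (j + 1) = ⟨j, by omega⟩ from pos_succ ⟨j, by omega⟩,
    show pos N (j + 1 + 1) = ⟨j + 1, by omega⟩ from pos_succ ⟨j + 1, by omega⟩] at h2
  rw [Fin.lt_def]; omega

theorem find_none {N : ℕ} [NeZero N] (u : Perm (Fin N))
    (h : ((List.range (N - 1)).map (· + 1)).find? (fun i => decide (val u (i + 1) < val u i)) = none) :
    u = 1 := by
  by_contra hne
  obtain ⟨a, b, hab, hd⟩ := exists_desc u hne
  rw [List.find?_eq_none] at h
  have := h (a.val + 1) (by simp; omega)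
  simp only [decide_eq_true_eq, val, pos_succ, pos_succ2 hab] at this
  rw [Fin.lt_def] at hd
  omega

theorem fuel_indep {N : ℕ} [NeZero N] (f1 f2 : ℕ) (u : Perm (Fin N)) (h1 : len u ≤ f1) (h2 : len u ≤ f2) :
    redWordAux N f1 u = redWordAux N f2 u := by
  induction f1 generalizing f2 u with
  | zero =>
    cases f2 with
    | zero => rfl
    | succ f2 =>
      simp only [redWordAux]
      split
      · rfl
      · rename_i i hi
        obtain ⟨a, b, hab, hd, rfl⟩ := find_some u i hi
        have := len_adj_desc u hab hd
        omega
  | succ f1 ih =>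
    cases f2 with
    | zero =>
      simp only [redWordAux]
      split
      · rfl
      · rename_i i hi
        obtain ⟨a, b, hab, hd, rfl⟩ := find_some u i hi
        have := len_adj_desc u hab hd
        omega
    | succ f2 =>
      simp only [redWordAux]
      split
      · rfl
      · rename_i i hi
        obtain ⟨a, b, hab, hd, rfl⟩ := find_some u i hi
        have := len_adj_desc u hab hd
        rw [t_succ hab]
        rw [ih f2 (u * swap a b) (by omega) (by omega)]

/-- the operator `∂_u` -/
noncomputable def op {N : ℕ} [NeZero N] (u : Perm (Fin N)) (f : MvPolynomial (Fin N) ℤ) : MvPolynomial (Fin N) ℤ :=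
  divDiffWord (redWord N u) f

theorem op_canon {N : ℕ} [NeZero N] (u : Perm (Fin N)) :
    (u = 1 ∧ ∀ f, op u f = f) ∨ ∃ a b : Fin N, a.val + 1 = b.val ∧ u b < u a ∧
      ∀ f, op u f = op (u * swap a b) (dd a f) := by
  have hpos : 0 < N * N := by have := Nat.pos_of_ne_zero (NeZero.ne N); positivity
  obtain ⟨k, hk⟩ : ∃ k, N * N = k + 1 := ⟨N * N - 1, by omega⟩
  cases hf : ((List.range (N - 1)).map (· + 1)).find? (fun i => decide (val u (i + 1) < val u i)) with
  | none =>
    left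
    refine ⟨find_none u hf, fun f => ?_⟩
    simp only [op, redWord, hk, redWordAux, hf, divDiffWord, List.foldr_nil]
  | some i =>
    right
    obtain ⟨a, b, hab, hd, rfl⟩ := find_some u i hf
    refine ⟨a, b, hab, hd, fun f => ?_⟩
    have hl := len_le_sq u
    have hd' := len_adj_desc u hab hd
    have e : redWord N u = redWord N (u * swap a b) ++ [a.val + 1] := by
      rw [redWord, redWord, fuel_indep (N * N) k (u * swap a b) (by omega) (by omega)]
      rw [hk]
      simp only [redWordAux, hf, t_succ hab]
    simp only [op, e, divDiffWord, List.foldr_append, List.foldr_cons, List.foldr_nil, dd]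

theorem op_one {N : ℕ} [NeZero N] (f : MvPolynomial (Fin N) ℤ) : op 1 f = f := by
  rcases op_canon (1 : Perm (Fin N)) with ⟨_, h⟩ | ⟨a, b, hab, hd, _⟩
  · exact h f
  · simp only [Perm.one_apply, Fin.lt_def] at hd; omega

theorem op_desc {N : ℕ} [NeZero N] (u : Perm (Fin N)) {a b : Fin N} (hab : a.val + 1 = b.val)
    (hd : u b < u a) (f : MvPolynomial (Fin N) ℤ) : op u f = op (u * swap a b) (dd a f) := by
  induction h : len u using Nat.strong_induction_on generalizing u a b f with
  | _ l ih =>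
  rcases op_canon u with ⟨rfl, _⟩ | ⟨c, d, hcd, hd2, hop⟩
  · simp only [Perm.one_apply, Fin.lt_def] at hd; omega
  rw [hop]
  by_cases hac : a = c
  · have : b = d := by apply Fin.ext; rw [← hab, ← hcd, hac]
    subst hac; subst this; rfl
  have l1 := len_adj_desc u hab hd
  have l2 := len_adj_desc u hcd hd2
  have braid : ∀ {p q r : Fin N} (hpq : p.val + 1 = q.val) (hqr : q.val + 1 = r.val) (h1 : u q < u p) (h2 : u r < u q),
      op (u * swap p q) (dd p f) = op (u * swap q r) (dd q f) := by
    intro p q r hpq hqr h1 h2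
    have npq := adj_ne hpq
    have nqr := adj_ne hqr
    have npr : p ≠ r := by rintro rfl; omega
    have hb : swap q r p = p := swap_apply_of_ne_of_ne npq npr
    have ha : swap p q r = r := swap_apply_of_ne_of_ne npr.symm nqr.symm
    have m1 := len_adj_desc u hpq h1
    have m2 := len_adj_desc u hqr h2
    have h3 : (u * swap p q) r < (u * swap p q) q := by
      simp only [Perm.mul_apply, swap_apply_right, ha]; exact h2.trans h1
    have h4 : (u * swap q r) q < (u * swap q r) p := by
      simp only [Perm.mul_apply, swap_apply_left, hb]; exact h2.trans h1
    have m3 := len_adj_desc _ hqr h3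
    have m4 := len_adj_desc _ hpq h4
    have h5 : (u * swap p q * swap q r) q < (u * swap p q * swap q r) p := by
      simp only [Perm.mul_apply, swap_apply_left, hb, ha]; exact h2
    have h6 : (u * swap q r * swap p q) r < (u * swap q r * swap p q) q := by
      simp only [Perm.mul_apply, swap_apply_right, ha, hb]; exact h1
    rw [ih (len (u * swap p q)) (by omega) _ hqr h3 _ rfl, ih (len (u * swap q r)) (by omega) _ hpq h4 _ rfl,
      ih (len (u * swap p q * swap q r)) (by omega) _ hpq h5 _ rfl,
      ih (len (u * swap q r * swap p q)) (by omega) _ hqr h6 _ rfl, dd_braid hpq hqr]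
    congr 1
    simp only [mul_assoc]
    congr 1
    ext x
    simp only [Perm.mul_apply]
    by_cases h1 : x = p
    · subst h1; simp [ha, hb]
    by_cases h2 : x = q
    · subst h2; simp [ha, hb]
    by_cases h3 : x = r
    · subst h3; simp [ha, hb]
    rw [swap_apply_of_ne_of_ne h1 h2, swap_apply_of_ne_of_ne h2 h3, swap_apply_of_ne_of_ne h1 h2, swap_apply_of_ne_of_ne h2 h3]
  by_cases hbc : b = c
  · subst hbc
    exact (braid hab hcd hd hd2).symm
  by_cases had : d = a
  · subst had
    exact braid hcd hab hd2 hd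
  have hbd : b ≠ d := by rintro rfl; apply hac; apply Fin.ext; omega
  have h3 : (u * swap a b) d < (u * swap a b) c := by
    simp only [Perm.mul_apply]
    rwa [swap_apply_of_ne_of_ne had hbd.symm, swap_apply_of_ne_of_ne (Ne.symm hac) (Ne.symm hbc)]
  have h4 : (u * swap c d) b < (u * swap c d) a := by
    simp only [Perm.mul_apply]
    rwa [swap_apply_of_ne_of_ne hbc hbd, swap_apply_of_ne_of_ne hac (Ne.symm had)]
  rw [ih (len (u * swap a b)) (by omega) _ hcd h3 _ rfl, ih (len (u * swap c d)) (by omega) _ hab h4 _ rfl,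
    dd_comm hab hcd hac (Ne.symm had) hbc hbd, mul_assoc, mul_assoc,
    swap_comm_disj (adj_ne hab) (adj_ne hcd) hac (Ne.symm had) hbc hbd]

theorem op_dd_asc {N : ℕ} [NeZero N] (u : Perm (Fin N)) {a b : Fin N} (hab : a.val + 1 = b.val)
    (hd : u a < u b) (f : MvPolynomial (Fin N) ℤ) : op u (dd a f) = op (u * swap a b) f := by
  rw [op_desc (u * swap a b) hab (by simpa using hd), mul_assoc, swap_mul_self, mul_one]

/-- induction along descents -/
theorem perm_ind {N : ℕ} {P : Perm (Fin N) → Prop} (h1 : P 1)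
    (h2 : ∀ u (a b : Fin N), a.val + 1 = b.val → u b < u a → P (u * swap a b) → P u) (u : Perm (Fin N)) : P u := by
  induction h : len u using Nat.strong_induction_on generalizing u with
  | _ l ih =>
    by_cases hu : u = 1
    · rw [hu]; exact h1
    · obtain ⟨a, b, hab, hd⟩ := exists_desc u hu
      exact h2 u a b hab hd (ih _ (by have := len_adj_desc u hab hd; omega) _ rfl)

theorem op_add {N : ℕ} [NeZero N] (u : Perm (Fin N)) (f g : MvPolynomial (Fin N) ℤ) :
    op u (f + g) = op u f + op u g := by
  induction u using perm_ind generalizing f g with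
  | h1 => simp [op_one]
  | h2 u a b hab hd ih => rw [op_desc u hab hd, op_desc u hab hd, op_desc u hab hd, dd_add hab, ih]

/-- `op` as an additive hom -/
noncomputable def opH {N : ℕ} [NeZero N] (u : Perm (Fin N)) : MvPolynomial (Fin N) ℤ →+ MvPolynomial (Fin N) ℤ :=
  AddMonoidHom.mk' (op u) (op_add u)

theorem op_zero {N : ℕ} [NeZero N] (u : Perm (Fin N)) : op u (0 : MvPolynomial (Fin N) ℤ) = 0 := (opH u).map_zero

theorem op_neg {N : ℕ} [NeZero N] (u : Perm (Fin N)) (f : MvPolynomial (Fin N) ℤ) : op u (-f) = - op u f :=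
  (opH u).map_neg f

theorem op_dd_desc {N : ℕ} [NeZero N] (u : Perm (Fin N)) {a b : Fin N} (hab : a.val + 1 = b.val)
    (hd : u b < u a) (f : MvPolynomial (Fin N) ℤ) : op u (dd a f) = 0 := by
  rw [op_desc u hab hd, dd_dd hab, op_zero]

theorem op_mul_sym {N : ℕ} [NeZero N] (u : Perm (Fin N)) (f g : MvPolynomial (Fin N) ℤ) (hg : g.IsSymmetric) :
    op u (g * f) = g * op u f := by
  induction u using perm_ind generalizing f with
  | h1 => simp [op_one]
  | h2 u a b hab hd ih => rw [op_desc u hab hd, op_desc u hab hd, dd_mul_sym hab _ _ (hg _), ih]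

theorem op_op {N : ℕ} [NeZero N] (u v : Perm (Fin N)) (f : MvPolynomial (Fin N) ℤ) :
    op u (op v f) = if len (u * v) = len u + len v then op (u * v) f else 0 := by
  induction v using perm_ind generalizing f with
  | h1 => simp [op_one, len_one]
  | h2 v a b hab hd ih =>
    have l1 := len_adj_desc v hab hd
    have l2 := len_mul_le u (v * swap a b)
    rw [op_desc v hab hd, ih]
    rw [← mul_assoc] at l2 ⊢
    rcases lt_trichotomy ((u * v) a) ((u * v) b) with h3 | h3 | h3
    · have l3 := len_adj_asc _ hab h3
      rw [op_dd_desc _ hab (by simpa using h3)]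
      rw [if_neg (show ¬ (len (u * v) = len u + len v) by omega)]
      simp
    · have := (u * v).injective h3
      rw [this] at hab; omega
    · have l3 := len_adj_desc _ hab h3
      rw [op_desc (u * v) hab h3]
      by_cases h : len (u * v) = len u + len v
      · rw [if_pos h, if_pos (by omega)]
      · rw [if_neg h, if_neg (by omega)]


/-- sign -/
def sg {N : ℕ} (i b : Fin N) : ℤ := if i < b then 1 else if b < i then -1 else 0

theorem sg_swap {N : ℕ} {p q i b : Fin N} (hpq : p.val + 1 = q.val) (h1 : ¬ (i = p ∧ b = q)) (h2 : ¬ (i = q ∧ b = p)) :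
    sg (swap p q i) (swap p q b) = sg i b := by
  have npq := adj_ne hpq
  unfold sg
  rw [swap_apply_def, swap_apply_def]
  simp only [Fin.lt_def, Fin.ext_iff] at *
  split_ifs <;> first | rfl | omega

theorem cov_desc {N : ℕ} {p q i b : Fin N} (hpq : p.val + 1 = q.val) (hib : i < b) (x : Perm (Fin N))
    (hc : Cov x i b) (h1 : ¬ (i = p ∧ b = q)) (hd : (x * swap i b) q < (x * swap i b) p) : x q < x p := by
  have npq := adj_ne hpq
  have inj : ∀ {s t : Fin N}, s ≠ t → (x s).val ≠ (x t).val := fun h e => h (x.injective (Fin.ext e))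
  obtain ⟨hc1, hc2⟩ := hc
  have hcp := hc2 p
  have hcq := hc2 q
  simp only [Perm.mul_apply] at hd
  by_cases e1 : p = i
  · have e2 : q ≠ b := fun h => h1 ⟨e1.symm, h.symm⟩
    have e3 : q ≠ i := by rintro rfl; exact npq e1
    subst e1
    rw [swap_apply_left, swap_apply_of_ne_of_ne e3 e2] at hd
    have := inj e2
    have := inj e3
    simp only [Fin.lt_def, ne_eq, Fin.ext_iff] at *
    by_contra hn
    exact hcq (by omega) (by omega) (by omega) (by omega)
  · by_cases e2 : p = b
    · subst e2
      have e3 : q ≠ i := by rintro rfl; simp only [Fin.lt_def] at hib; omega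
      rw [swap_apply_right, swap_apply_of_ne_of_ne e3 npq.symm] at hd
      exact hd.trans hc1
    · rw [swap_apply_of_ne_of_ne e1 e2] at hd
      by_cases e3 : q = i
      · subst e3
        rw [swap_apply_left] at hd
        exact hc1.trans hd
      · by_cases e4 : q = b
        · subst e4
          rw [swap_apply_right] at hd
          have := inj e1
          have := inj e2
          simp only [Fin.lt_def, ne_eq, Fin.ext_iff] at *
          by_contra hn
          exact hcp (by omega) (by omega) (by omega) (by omega)
        · rwa [swap_apply_of_ne_of_ne e3 e4] at hd

theorem down_desc {N : ℕ} {p q i b : Fin N} (hpq : p.val + 1 = q.val) (hib : i ≠ b) (u : Perm (Fin N))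
    (hc : len (u * swap i b) + 1 = len u) (h1 : ¬ (i = p ∧ b = q)) (h2 : ¬ (i = q ∧ b = p))
    (hd : u q < u p) : (u * swap i b) q < (u * swap i b) p := by
  rcases lt_or_gt_of_ne hib with h | h
  · rw [cov_down_iff u h] at hc
    exact cov_desc hpq h _ hc h1 (by simpa [mul_assoc] using hd)
  · rw [swap_comm] at hc ⊢
    rw [cov_down_iff u h] at hc
    exact cov_desc hpq h _ hc (fun h => h2 ⟨h.2, h.1⟩) (by simpa [mul_assoc] using hd)

theorem op_monk {N : ℕ} [NeZero N] (u : Perm (Fin N)) (i : Fin N) (f : MvPolynomial (Fin N) ℤ) :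
    op u (X i * f) = X (u i) * op u f +
      ∑ b, sg i b • (if len (u * swap i b) + 1 = len u then op (u * swap i b) f else 0) := by
  induction u using perm_ind generalizing i f with
  | h1 => simp [op_one, len_one]
  | h2 u p q hpq hd ih =>
    have npq := adj_ne hpq
    have lu := len_adj_desc u hpq hd
    set s := swap p q with hs
    rw [op_desc u hpq hd, dd_mul_X hpq, op_add, ih, ← op_desc u hpq hd]
    have e1 : (u * s) (s i) = u i := by simp [hs]
    rw [← hs, e1, add_assoc]
    congr 1
    rw [← Equiv.sum_comp s]
    have key : ∀ b, sg (s i) (s b) • (if len (u * s * swap (s i) (s b)) + 1 = len (u * s) then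
        op (u * s * swap (s i) (s b)) (dd p f) else 0) +
        (if i = p ∧ b = q then op (u * s) f else if i = q ∧ b = p then - op (u * s) f else 0) =
        sg i b • (if len (u * swap i b) + 1 = len u then op (u * swap i b) f else 0) := by
      intro b
      have e2 : u * s * swap (s i) (s b) = u * swap i b * s := by
        rw [Equiv.swap_apply_apply s i b]
        have : s⁻¹ = s := by simp [hs]
        have h2 : s * s = 1 := by simp [hs]
        rw [this]
        rw [show u * s * (s * swap i b * s) = u * (s * s) * swap i b * s by group, h2, mul_one]
      rw [e2]
      by_cases hib : i = b
      · subst hib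
        have : ¬ (i = p ∧ i = q) := fun h => npq (h.1.symm.trans h.2)
        have h3 : ¬ (i = q ∧ i = p) := fun h => npq (h.2.symm.trans h.1)
        simp [sg, this, h3]
      by_cases h1 : i = p ∧ b = q
      · obtain ⟨rfl, rfl⟩ := h1
        have h2 : s * s = 1 := by simp [hs]
        rw [← hs, mul_assoc, h2, mul_one, if_neg (by omega), if_pos lu]
        have : i < b := by rw [Fin.lt_def]; omega
        simp [sg, this]
      by_cases h2 : i = q ∧ b = p
      · obtain ⟨rfl, rfl⟩ := h2
        have h2 : s * s = 1 := by simp [hs]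
        rw [swap_comm, ← hs, mul_assoc, h2, mul_one, if_neg (by omega), if_pos lu]
        have : b < i := by rw [Fin.lt_def]; omega
        simp [sg, this, this.not_gt, npq.symm]
      rw [if_neg h1, if_neg h2, add_zero, hs, sg_swap hpq h1 h2, ← hs]
      congr 1
      rcases lt_trichotomy ((u * swap i b) p) ((u * swap i b) q) with h3 | h3 | h3
      · rw [op_dd_desc _ hpq (by simpa [hs] using h3), if_neg (c := len (u * swap i b) + 1 = len u)]
        · simp
        · intro hc
          exact absurd (down_desc hpq hib u hc h1 h2 hd) h3.not_gt
      · exact absurd ((u * swap i b).injective h3) npq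
      · have l3 := len_adj_desc _ hpq h3
        rw [← hs] at l3
        rw [op_desc (u * swap i b) hpq h3, ← hs]
        by_cases h : len (u * swap i b) + 1 = len u
        · rw [if_pos h, if_pos (by omega)]
        · rw [if_neg h, if_neg (by omega)]
    rw [← Finset.sum_congr rfl (fun b _ => key b), Finset.sum_add_distrib]
    congr 1
    by_cases h1 : i = p
    · subst h1; simp [npq]
    · by_cases h2 : i = q
      · subst h2; simp [npq.symm, op_neg]
      · simp [h1, h2, op_zero]

/-- the functional `f ↦ (∂_u f)(0)` -/
noncomputable def ph {N : ℕ} [NeZero N] (u : Perm (Fin N)) : MvPolynomial (Fin N) ℤ →+ ℤ :=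
  (constantCoeff (R := ℤ) (σ := Fin N)).toAddMonoidHom.comp (opH u)

theorem ph_apply {N : ℕ} [NeZero N] (u : Perm (Fin N)) (f : MvPolynomial (Fin N) ℤ) :
    ph u f = constantCoeff (op u f) := rfl

theorem ph_one {N : ℕ} [NeZero N] (u : Perm (Fin N)) : ph u 1 = if u = 1 then 1 else 0 := by
  rw [ph_apply]
  split_ifs with h
  · subst h; simp [op_one]
  · obtain ⟨a, b, hab, hd⟩ := exists_desc u h
    rw [op_desc u hab hd, dd_one hab, op_zero]; simp

theorem ph_monk {N : ℕ} [NeZero N] (u : Perm (Fin N)) (i : Fin N) (f : MvPolynomial (Fin N) ℤ) :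
    ph u (X i * f) = ∑ b, sg i b * (if len (u * swap i b) + 1 = len u then ph (u * swap i b) f else 0) := by
  rw [ph_apply, op_monk, map_add, map_mul, constantCoeff_X, zero_mul, zero_add, map_sum]
  refine Finset.sum_congr rfl fun b _ => ?_
  rw [map_zsmul, smul_eq_mul]
  split_ifs <;> simp [ph_apply]

theorem ph_symIdeal {N : ℕ} [NeZero N] (u : Perm (Fin N)) (f : MvPolynomial (Fin N) ℤ) (hf : f ∈ symIdeal N) :
    ph u f = 0 := by
  unfold symIdeal at hf
  induction hf using Submodule.span_induction generalizing u with
  | mem x h =>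
    rw [← mul_one x, ph_apply, op_mul_sym _ _ _ h.1, map_mul, h.2, zero_mul]
  | zero => simp
  | add x y _ _ hx hy => rw [map_add, hx, hy, add_zero]
  | smul r x _ hx =>
    rw [smul_eq_mul]
    induction r using MvPolynomial.induction_on generalizing u with
    | C r =>
      rw [C_mul', map_zsmul, hx, smul_zero]
    | add p q hp hq => rw [add_mul, map_add, hp, hq, add_zero]
    | mul_X p i hp =>
      rw [mul_comm p, mul_assoc, ph_monk]
      apply Finset.sum_eq_zero
      intro b _
      split_ifs <;> simp [hp]


/-- intermediate permutations on the way from `1` to `w₀` -/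
def St {N : ℕ} (w : Perm (Fin N)) (i j : ℕ) : Prop :=
  ∀ p : Fin N, (p.val < i → (w p).val + p.val + 1 = N) ∧ (p.val = i → (w p).val = j) ∧
    (i < p.val → p.val ≤ i + j → (w p).val + i + 1 = p.val) ∧ (i + j < p.val → (w p).val + i = p.val)

theorem St_step {N : ℕ} [NeZero N] (w : Perm (Fin N)) (i j : ℕ) (hij : i + j + 1 < N) (hst : St w i j)
    (f : MvPolynomial (Fin N) ℤ) (hf : ∀ u, ph u f = if u = w then 1 else 0) :
    ∃ w' : Perm (Fin N), St w' i (j + 1) ∧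
      ∀ u, ph u (X ⟨i, by omega⟩ * f) = if u = w' then 1 else 0 := by
  set I : Fin N := ⟨i, by omega⟩ with hI
  set B : Fin N := ⟨i + j + 1, hij⟩ with hB
  have hIB : I < B := by rw [Fin.lt_def]; simp [hI, hB]
  have hIv : I.val = i := rfl
  have hBv : B.val = i + j + 1 := rfl
  have wI : (w I).val = j := (hst I).2.1 rfl
  have wB : (w B).val = j + 1 := by
    have := (hst B).2.2.2 (by simp [hB])
    simp only [hB] at this ⊢; omega
  have hcov : Cov w I B := by
    refine ⟨by rw [Fin.lt_def]; omega, fun p _ _ h3 h4 => ?_⟩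
    rw [Fin.lt_def] at h3 h4; omega
  refine ⟨w * swap I B, ?_, ?_⟩
  · intro p
    have hp := hst p
    rw [Perm.mul_apply]
    by_cases h1 : p = I
    · rw [h1, swap_apply_left, wB]
      refine ⟨by omega, by omega, by omega, by omega⟩
    by_cases h2 : p = B
    · rw [h2, swap_apply_right, wI]
      refine ⟨by omega, by omega, by omega, by omega⟩
    rw [swap_apply_of_ne_of_ne h1 h2]
    obtain ⟨a1, a2, a3, a4⟩ := hp
    simp only [hI, hB, Fin.ext_iff] at h1 h2
    refine ⟨a1, by omega, fun h3 h4 => a3 h3 (by omega), fun h3 => a4 (by omega)⟩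
  · intro u
    rw [ph_monk]
    have key : ∀ b, sg I b * (if len (u * swap I b) + 1 = len u then ph (u * swap I b) f else 0) =
        if b = B then (if u = w * swap I B then 1 else 0) else 0 := by
      intro b
      rw [hf]
      by_cases hu : u * swap I b = w
      · have hu' : u = w * swap I b := by rw [← hu, mul_assoc, swap_mul_self, mul_one]
        rw [if_pos hu]
        by_cases hb : b = B
        · subst hb
          rw [if_pos rfl, if_pos hu', hu, if_pos]
          · simp [sg, hIB]
          · rw [hu']; exact ((cov_iff w hIB).2 hcov).symm
        · rw [if_neg hb, mul_eq_zero]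
          by_contra hcon
          push Not at hcon
          obtain ⟨hs, hl⟩ := hcon
          have hl' : len (w * swap I b) = len w + 1 := by
            by_contra hne
            apply hl
            rw [if_neg]
            rw [hu, hu']
            omega
          rcases lt_trichotomy I b with h | h | h
          · rw [cov_iff w h] at hl'
            obtain ⟨c1, c2⟩ := hl'
            have c3 := c2 B hIB
            have hbq := (hst b).2.2
            simp only [Fin.lt_def, hI, hB, Fin.ext_iff] at *
            by_cases hbl : b.val ≤ i + j
            · have := hbq.1 h hbl; omega
            · have := hbq.2 (by omega)
              exact c3 (by omega) (by omega) (by omega)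
          · apply hs; simp [sg, h]
          · rw [swap_comm, cov_iff w h] at hl'
            have c1 := hl'.1
            have hbq := (hst b).1 h
            simp only [Fin.lt_def, hI] at *
            omega
      · rw [if_neg hu]
        have : ¬ (b = B ∧ u = w * swap I B) := by
          rintro ⟨rfl, rfl⟩
          apply hu
          rw [mul_assoc, swap_mul_self, mul_one]
        simp
        tauto
    rw [Finset.sum_congr rfl (fun b _ => key b)]
    simp

theorem ph_staircase {N : ℕ} [NeZero N] (u : Perm (Fin N)) :
    ph u (staircase N) = if u = w0 N then 1 else 0 := by
  have pw : ∀ i (hi : i < N) (w : Perm (Fin N)) (f : MvPolynomial (Fin N) ℤ) (_ : St w i 0)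
      (_ : ∀ u, ph u f = if u = w then 1 else 0) (j : ℕ) (_ : i + j < N),
      ∃ w' : Perm (Fin N), St w' i j ∧
        ∀ u, ph u (X ⟨i, hi⟩ ^ j * f) = if u = w' then 1 else 0 := by
    intro i hi w f hst hf j hj
    induction j with
    | zero => exact ⟨w, hst, by simpa using hf⟩
    | succ j ih =>
      obtain ⟨w', h1, h2⟩ := ih (by omega)
      obtain ⟨w'', h3, h4⟩ := St_step w' i j (by omega) h1 _ h2
      refine ⟨w'', h3, fun u => ?_⟩
      rw [pow_succ', mul_assoc, h4]
  have main : ∀ i, i ≤ N → ∃ w : Perm (Fin N), St w i 0 ∧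
      ∀ u, ph u (∏ p ∈ Finset.range i, (if h : p < N then X ⟨p, h⟩ else 1) ^ (N - 1 - p)) = if u = w then 1 else 0 := by
    intro i hi
    induction i with
    | zero =>
      refine ⟨1, ?_, fun u => by rw [Finset.range_zero, Finset.prod_empty, ph_one]⟩
      intro p
      refine ⟨by omega, by simp, by omega, by simp⟩
    | succ i ih =>
      obtain ⟨w, h1, h2⟩ := ih (by omega)
      obtain ⟨w', h3, h4⟩ := pw i (by omega) w _ h1 h2 (N - 1 - i) (by omega)
      refine ⟨w', ?_, fun u => ?_⟩
      · intro p
        obtain ⟨a1, a2, a3, a4⟩ := h3 p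
        have := p.isLt
        refine ⟨fun h => ?_, fun h => ?_, by omega, fun h => ?_⟩
        · by_cases hp : p.val < i
          · exact a1 hp
          · have := a2 (by omega); omega
        · have := a3 (by omega) (by omega); omega
        · have := a3 (by omega) (by omega); omega
      · rw [Finset.prod_range_succ, mul_comm, dif_pos (by omega), h4]
  obtain ⟨w, h1, h2⟩ := main N le_rfl
  have hw : w = w0 N := by
    ext p
    have := (h1 p).1 p.isLt
    simp [w0]; omega
  rw [← hw, ← h2, Finset.prod_range]
  unfold staircase
  simp

theorem ph_schubert {N : ℕ} [NeZero N] (u w : Perm (Fin N)) :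
    ph u (schubertPoly N w) = if u = w then 1 else 0 := by
  have : schubertPoly N w = op (w⁻¹ * w0 N) (staircase N) := rfl
  rw [ph_apply, this, op_op]
  have e : constantCoeff (op (u * (w⁻¹ * w0 N)) (staircase N)) = if u = w then 1 else 0 := by
    rw [← ph_apply, ph_staircase]
    have : u * (w⁻¹ * w0 N) = w0 N ↔ u = w := by
      rw [← mul_assoc, mul_eq_right, mul_inv_eq_one]
    simp [this]
  by_cases h : u = w
  · subst h
    rw [if_pos, e]
    have := len_mul_w0 u⁻¹
    rw [len_inv] at this
    rw [mul_inv_cancel_left]; omega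
  · rw [if_neg h] at e ⊢
    split_ifs
    · exact e
    · simp


/-- Bruhat operators as matrices -/
noncomputable def Gm {N : ℕ} (a b : Fin N) : Matrix (Perm (Fin N)) (Perm (Fin N)) ℤ :=
  fun w u => if u = w * swap a b ∧ len u = len w + 1 then 1 else 0

theorem mul_Gm {N : ℕ} (A : Matrix (Perm (Fin N)) (Perm (Fin N)) ℤ) (a b : Fin N) (w u : Perm (Fin N)) :
    (A * Gm a b) w u = if len u = len (u * swap a b) + 1 then A w (u * swap a b) else 0 := by
  rw [Matrix.mul_apply, Finset.sum_eq_single (u * swap a b)]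
  · simp [Gm, mul_assoc]
  · intro v _ hv
    have : ¬ (u = v * swap a b) := by
      rintro rfl
      apply hv
      simp [mul_assoc]
    simp [Gm, this]
  · simp

theorem Gm_Gm {N : ℕ} {a b c d : Fin N} (hab : a < b) (hcd : c < d) (w u : Perm (Fin N)) :
    (Gm a b * Gm c d) w u = if u = w * (swap a b * swap c d) ∧ Cov w a b ∧ Cov (w * swap a b) c d then 1 else 0 := by
  rw [mul_Gm, Gm, ← ite_and, ← cov_iff w hab, ← cov_iff _ hcd]
  congr 1
  apply propext
  constructor
  · rintro ⟨h1, h2, h3⟩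
    have : u = w * (swap a b * swap c d) := by
      rw [← mul_assoc, ← h2, mul_assoc, swap_mul_self, mul_one]
    refine ⟨this, ?_, ?_⟩
    · rw [← h2]; exact h3
    · rw [← h2, mul_assoc, swap_mul_self, mul_one]; exact h1
  · rintro ⟨h1, h2, h3⟩
    have : u * swap c d = w * swap a b := by
      rw [h1, ← mul_assoc, mul_assoc, swap_mul_self, mul_one]
    rw [this]
    refine ⟨?_, rfl, h2⟩
    rw [← h3, h1, mul_assoc]

theorem cov_comm_aux {N : ℕ} {a b c d : Fin N} (hab : a < b) (hcd : c < d)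
    (h1 : a ≠ c) (h2 : a ≠ d) (h3 : b ≠ c) (h4 : b ≠ d) (w : Perm (Fin N))
    (hA : Cov w a b) (hB : Cov (w * swap a b) c d) : Cov w c d ∧ Cov (w * swap c d) a b := by
  have inj : ∀ {s t : Fin N}, s ≠ t → (w s).val ≠ (w t).val := fun h e => h (w.injective (Fin.ext e))
  have i1 := inj h1
  have i2 := inj h2
  have i3 := inj h3
  have i4 := inj h4
  obtain ⟨a1, a2⟩ := hA
  obtain ⟨b1, b2⟩ := hB
  have e1 : (w * swap a b) a = w b := by simp
  have e2 : (w * swap a b) b = w a := by simp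
  have e3 : (w * swap a b) c = w c := by rw [Perm.mul_apply, swap_apply_of_ne_of_ne h1.symm h3.symm]
  have e4 : (w * swap a b) d = w d := by rw [Perm.mul_apply, swap_apply_of_ne_of_ne h2.symm h4.symm]
  have f1 : (w * swap c d) c = w d := by simp
  have f2 : (w * swap c d) d = w c := by simp
  have f3 : (w * swap c d) a = w a := by rw [Perm.mul_apply, swap_apply_of_ne_of_ne h1 h2]
  have f4 : (w * swap c d) b = w b := by rw [Perm.mul_apply, swap_apply_of_ne_of_ne h3 h4]
  have ba := b2 a
  have bb := b2 b
  have ac := a2 c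
  have ad := a2 d
  have bi : ∀ i, i ≠ a → i ≠ b → (w * swap a b) i = w i := fun i x y => by
    rw [Perm.mul_apply, swap_apply_of_ne_of_ne x y]
  have ai : ∀ i, i ≠ c → i ≠ d → (w * swap c d) i = w i := fun i x y => by
    rw [Perm.mul_apply, swap_apply_of_ne_of_ne x y]
  rw [e3, e4] at b1 b2
  rw [e3, e4, e1] at ba
  rw [e3, e4, e2] at bb
  refine ⟨⟨b1, fun i => ?_⟩, ?_⟩
  · by_cases ia : i = a
    · subst ia
      grind
    by_cases ib : i = b
    · subst ib
      grind
    have := b2 i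
    rwa [bi i ia ib] at this
  · unfold Cov
    rw [f3, f4]
    refine ⟨a1, fun i => ?_⟩
    by_cases ia : i = c
    · subst ia
      rw [f1]
      grind
    by_cases ib : i = d
    · subst ib
      rw [f2]
      grind
    rw [ai i ia ib]
    exact a2 i

theorem Gm_comm {N : ℕ} {a b c d : Fin N} (hab : a < b) (hcd : c < d)
    (h1 : a ≠ c) (h2 : a ≠ d) (h3 : b ≠ c) (h4 : b ≠ d) : Gm a b * Gm c d = Gm c d * Gm a b := by
  ext w u
  rw [Gm_Gm hab hcd, Gm_Gm hcd hab, swap_comm_disj hab.ne hcd.ne h1 h2 h3 h4]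
  congr 1
  apply propext
  constructor
  · rintro ⟨x, y, z⟩
    exact ⟨x, cov_comm_aux hab hcd h1 h2 h3 h4 w y z⟩
  · rintro ⟨x, y, z⟩
    exact ⟨x, cov_comm_aux hcd hab h1.symm h3.symm h2.symm h4.symm w y z⟩

theorem Gm_rel {N : ℕ} {a k b : Fin N} (hak : a < k) (hkb : k < b) :
    Gm k b * Gm a k = Gm a b * Gm k b + Gm a k * Gm a b := by
  have hab := hak.trans hkb
  ext w u
  rw [Matrix.add_apply, Gm_Gm hkb hak, Gm_Gm hab hkb, Gm_Gm hak hab]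
  have s1 : swap a b * swap k b = swap k b * swap a k := by
    ext p
    simp only [Perm.mul_apply, swap_apply_def]
    grind
  have s2 : swap a k * swap a b = swap k b * swap a k := by
    ext p
    simp only [Perm.mul_apply, swap_apply_def]
    grind
  rw [s1, s2]
  by_cases hu : u = w * (swap k b * swap a k)
  swap
  · simp [hu]
  have inj : ∀ {s t : Fin N}, s ≠ t → (w s).val ≠ (w t).val := fun h e => h (w.injective (Fin.ext e))
  have i1 := inj hak.ne
  have i2 := inj hkb.ne
  have i3 := inj hab.ne
  have e1 : (w * swap k b) a = w a := by rw [Perm.mul_apply, swap_apply_of_ne_of_ne hak.ne hab.ne]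
  have e2 : (w * swap k b) k = w b := by simp
  have e3 : (w * swap k b) b = w k := by simp
  have f1 : (w * swap a b) a = w b := by simp
  have f2 : (w * swap a b) k = w k := by rw [Perm.mul_apply, swap_apply_of_ne_of_ne hak.ne' hkb.ne]
  have f3 : (w * swap a b) b = w a := by simp
  have g1 : (w * swap a k) a = w k := by simp
  have g2 : (w * swap a k) k = w a := by simp
  have g3 : (w * swap a k) b = w b := by rw [Perm.mul_apply, swap_apply_of_ne_of_ne hab.ne' hkb.ne']
  have ei : ∀ p q i, i ≠ p → i ≠ q → (w * swap p q) i = w i := fun p q i x y => by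
    rw [Perm.mul_apply, swap_apply_of_ne_of_ne x y]
  have A : (Cov w k b ∧ Cov (w * swap k b) a k) ↔ (w k < w b ∧ w a < w b ∧
      (∀ i, k < i → i < b → w k < w i → w i < w b → False) ∧
      (∀ i, a < i → i < k → w a < w i → w i < w b → False)) := by
    unfold Cov
    rw [e1, e2]
    constructor
    · rintro ⟨⟨x1, x2⟩, x3, x4⟩
      refine ⟨x1, x3, x2, fun i y1 y2 => ?_⟩
      have := x4 i y1 y2
      rwa [ei _ _ i y2.ne (y2.trans hkb).ne] at this
    · rintro ⟨x1, x3, x2, x4⟩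
      refine ⟨⟨x1, x2⟩, x3, fun i y1 y2 => ?_⟩
      have := x4 i y1 y2
      rwa [ei _ _ i y2.ne (y2.trans hkb).ne]
  have B : (Cov w a b ∧ Cov (w * swap a b) k b) ↔ ((w k < w b ∧ w a < w b ∧
      (∀ i, k < i → i < b → w k < w i → w i < w b → False) ∧
      (∀ i, a < i → i < k → w a < w i → w i < w b → False)) ∧ w k < w a) := by
    unfold Cov
    rw [f2, f3]
    constructor
    · rintro ⟨⟨x1, x2⟩, x3, x4⟩
      refine ⟨⟨x3.trans x1, x1, fun i y1 y2 => ?_, fun i y1 y2 => x2 i y1 (y2.trans hkb)⟩, x3⟩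
      have := x4 i y1 y2
      rw [ei _ _ i (hak.trans y1).ne' y2.ne] at this
      have h2 := x2 i (hak.trans y1) y2
      have := inj (hak.trans y1).ne
      grind
    · rintro ⟨⟨x1, x3, x2, x4⟩, x5⟩
      refine ⟨⟨x3, fun i y1 y2 => ?_⟩, x5, fun i y1 y2 => ?_⟩
      · have h2 := x2 i
        have h4 := x4 i
        by_cases hik : i = k
        · subst hik
          intro h; exact absurd h x5.asymm
        · grind
      · rw [ei _ _ i (hak.trans y1).ne' y2.ne]
        have h2 := x2 i y1 y2
        grind
  have C : (Cov w a k ∧ Cov (w * swap a k) a b) ↔ ((w k < w b ∧ w a < w b ∧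
      (∀ i, k < i → i < b → w k < w i → w i < w b → False) ∧
      (∀ i, a < i → i < k → w a < w i → w i < w b → False)) ∧ w a < w k) := by
    unfold Cov
    rw [g1, g3]
    constructor
    · rintro ⟨⟨x1, x2⟩, x3, x4⟩
      refine ⟨⟨x3, x1.trans x3, fun i y1 y2 => ?_, fun i y1 y2 => ?_⟩, x1⟩
      · have := x4 i (hak.trans y1) y2
        rwa [ei _ _ i (hak.trans y1).ne' y1.ne'] at this
      · have := x4 i y1 (y2.trans hkb)
        rw [ei _ _ i y1.ne' y2.ne] at this
        have h2 := x2 i y1 y2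
        have := inj y2.ne
        grind
    · rintro ⟨⟨x1, x3, x2, x4⟩, x5⟩
      refine ⟨⟨x5, fun i y1 y2 => ?_⟩, x1, fun i y1 y2 => ?_⟩
      · have h4 := x4 i y1 y2
        grind
      · by_cases hik : i = k
        · subst hik
          rw [g2]
          intro h; exact absurd h x5.asymm
        · rw [ei _ _ i y1.ne' hik]
          have h2 := x2 i
          have h4 := x4 i
          grind
  simp only [A, B, C, hu, true_and]
  by_cases hy : w k < w a
  · have : ¬ w a < w k := hy.asymm
    simp [hy, this]
  · have : w a < w k := by
      grind
    simp [hy, this]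


/-- adjoining a centre -/
noncomputable def Tc {N : ℕ} {A : Type*} [Ring A] (g : Fin N → A) (F : Finset (Fin N) → A) (J : Finset (Fin N)) : A :=
  F J + ∑ b : {b // b ∈ J}, Tc g F (J.erase b.1) * g b.1
termination_by J.card
decreasing_by exact Finset.card_erase_lt_of_mem b.2

theorem Tc_eq {N : ℕ} {A : Type*} [Ring A] (g : Fin N → A) (F : Finset (Fin N) → A) (J : Finset (Fin N)) :
    Tc g F J = F J + ∑ b ∈ J, Tc g F (J.erase b) * g b := by
  rw [Tc, Finset.univ_eq_attach, Finset.sum_attach J (fun b => Tc g F (J.erase b) * g b)]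

theorem Tc_exp {N : ℕ} {A : Type*} [Ring A] (g h : Fin N → A) (F : Finset (Fin N) → A) (J : Finset (Fin N)) :
    Tc g (Tc h F) J = F J + (∑ c ∈ J, Tc g (Tc h F) (J.erase c) * h c +
      ∑ b ∈ J, Tc g (Tc h F) (J.erase b) * g b) -
      ∑ c ∈ J, ∑ b ∈ J.erase c, Tc g (Tc h F) ((J.erase c).erase b) * (g b * h c) := by
  rw [Tc_eq g, Tc_eq h F J]
  have : ∀ c, Tc h F (J.erase c) * h c = Tc g (Tc h F) (J.erase c) * h c -
      ∑ b ∈ J.erase c, Tc g (Tc h F) ((J.erase c).erase b) * (g b * h c) := by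
    intro c
    rw [Tc_eq g (Tc h F) (J.erase c), add_mul, Finset.sum_mul]
    simp only [mul_assoc]
    abel
  rw [Finset.sum_congr rfl (fun c _ => this c), Finset.sum_sub_distrib]
  abel

theorem Tc_swap {N : ℕ} {A : Type*} [Ring A] (g h : Fin N → A) (F : Finset (Fin N) → A) (J : Finset (Fin N))
    (hgh : ∀ b ∈ J, ∀ c ∈ J, b ≠ c → g b * h c = h c * g b) :
    Tc g (Tc h F) J = Tc h (Tc g F) J := by
  induction J using Finset.strongInduction with
  | H J ih =>
    have ih' : ∀ K, K ⊂ J → Tc g (Tc h F) K = Tc h (Tc g F) K := fun K hK =>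
      ih K hK (fun b hb c hc => hgh b (hK.1 hb) c (hK.1 hc))
    rw [Tc_exp g h, Tc_exp h g]
    have e1 : ∀ f : Fin N → A, ∑ c ∈ J, Tc g (Tc h F) (J.erase c) * f c = ∑ c ∈ J, Tc h (Tc g F) (J.erase c) * f c :=
      fun f => Finset.sum_congr rfl fun c hc => by rw [ih' _ (Finset.erase_ssubset hc)]
    rw [e1 g, e1 h]
    congr 1
    · rw [add_comm (∑ c ∈ J, _ * h c)]
    rw [Finset.sum_sigma', Finset.sum_sigma']
    apply Finset.sum_nbij' (fun p => ⟨p.2, p.1⟩) (fun p => ⟨p.2, p.1⟩)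
    · rintro ⟨c, b⟩ hp
      simp only [Finset.mem_sigma, Finset.mem_erase] at *
      exact ⟨hp.2.2, hp.2.1.symm, hp.1⟩
    · rintro ⟨c, b⟩ hp
      simp only [Finset.mem_sigma, Finset.mem_erase] at *
      exact ⟨hp.2.2, hp.2.1.symm, hp.1⟩
    · rintro ⟨c, b⟩ hp; rfl
    · rintro ⟨c, b⟩ hp; rfl
    · rintro ⟨c, b⟩ hp
      simp only [Finset.mem_sigma, Finset.mem_erase] at *
      rw [Finset.erase_right_comm, hgh b hp.2.2 c hp.1 hp.2.1, ih']
      refine lt_of_le_of_lt (Finset.erase_subset _ _) (Finset.erase_ssubset hp.2.2)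

/-- the elements `R L J` -/
noncomputable def Rr {N : ℕ} : List (Fin N) → Finset (Fin N) → Matrix (Perm (Fin N)) (Perm (Fin N)) ℤ
  | [] => fun J => if J = ∅ then 1 else 0
  | i :: L => Tc (Gm i) (Rr L)

theorem Rr_cons {N : ℕ} (i : Fin N) (L : List (Fin N)) (J : Finset (Fin N)) :
    Rr (i :: L) J = Rr L J + ∑ b ∈ J, Rr (i :: L) (J.erase b) * Gm i b := Tc_eq _ _ _

theorem Rr_swap {N : ℕ} (i k : Fin N) (L : List (Fin N)) (J : Finset (Fin N)) (hik : i ≠ k)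
    (hi : ∀ b ∈ J, i < b) (hk : ∀ b ∈ J, k < b) : Rr (i :: k :: L) J = Rr (k :: i :: L) J :=
  Tc_swap _ _ _ _ fun b hb c hc hbc =>
    Gm_comm (hi b hb) (hk c hc) hik (hi c hc).ne (hk b hb).ne' hbc

theorem Rr_one_supp {N : ℕ} (k : Fin N) (J : Finset (Fin N)) (hk : ∀ b ∈ J, k < b) (w u : Perm (Fin N))
    (h : Rr [k] J w u ≠ 0) : ∀ c ∈ J, u c < u k := by
  induction J using Finset.strongInduction generalizing u with
  | H J ih =>
    intro c hc
    rw [Rr_cons, Matrix.add_apply, Matrix.sum_apply] at h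
    have hJ : J ≠ ∅ := Finset.ne_empty_of_mem hc
    simp only [Rr, if_neg hJ] at h
    rw [Matrix.zero_apply, zero_add] at h
    obtain ⟨b, hb, hb2⟩ := Finset.exists_ne_zero_of_sum_ne_zero h
    change (Rr [k] (J.erase b) * Gm k b) w u ≠ 0 at hb2
    rw [mul_Gm] at hb2
    have hlen : len u = len (u * swap k b) + 1 := by
      by_contra hn; rw [if_neg hn] at hb2; exact hb2 rfl
    rw [if_pos hlen] at hb2
    have hkb := hk b hb
    have hcov := ((cov_down_iff u hkb).1 hlen.symm).1
    simp only [Perm.mul_apply, swap_apply_left, swap_apply_right] at hcov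
    by_cases hcb : c = b
    · rw [hcb]; exact hcov
    · have := ih (J.erase b) (Finset.erase_ssubset hb) (fun x hx => hk x (Finset.mem_of_mem_erase hx)) _ hb2 c
        (Finset.mem_erase.2 ⟨hcb, hc⟩)
      simp only [Perm.mul_apply, swap_apply_left] at this
      rw [swap_apply_of_ne_of_ne (hk c hc).ne' hcb] at this
      exact this.trans hcov

theorem Rr_vanish {N : ℕ} (k : Fin N) (J : Finset (Fin N)) (hk : ∀ b ∈ J, k < b) (c : Fin N) (hc : c ∈ J) :
    Rr [k] J * Gm k c = 0 := by
  ext w u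
  rw [mul_Gm, Matrix.zero_apply]
  split_ifs with hlen
  · by_contra hne
    have h1 := Rr_one_supp k J hk _ _ hne c hc
    have h2 := ((cov_down_iff u (hk c hc)).1 hlen.symm).1
    exact h1.asymm h2
  · rfl

theorem Rr_key {N : ℕ} (k : Fin N) (L : List (Fin N)) (hL : ∀ a ∈ L, a < k) (hnd : L.Nodup)
    (J : Finset (Fin N)) (hJ : ∀ b ∈ J, k < b) :
    Rr L (insert k J) = Rr (k :: L) J * ((L.map fun a => Gm a k).sum - ∑ c ∈ J, Gm k c) := by
  induction L generalizing J with
  | nil =>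
    have : (Rr [] (insert k J) : Matrix (Perm (Fin N)) (Perm (Fin N)) ℤ) = 0 := by
      simp [Rr]
    rw [this, List.map_nil, List.sum_nil, zero_sub, mul_neg, Finset.mul_sum,
      Finset.sum_eq_zero (fun c hc => Rr_vanish k J hJ c hc), neg_zero]
  | cons i L ihL =>
    have hik : i < k := hL i List.mem_cons_self
    have hL' : ∀ a ∈ L, a < k := fun a ha => hL a (List.mem_cons_of_mem _ ha)
    have hnd' := hnd.of_cons
    have hiL : i ∉ L := hnd.notMem
    induction J using Finset.strongInduction with
    | H J ihJ =>
      have hkJ : k ∉ J := fun h => lt_irrefl _ (hJ k h)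
      rw [Rr_cons, Finset.sum_insert hkJ, Finset.erase_insert hkJ, ihL hL' hnd' J hJ]
      have ebig : ∀ b ∈ J, Rr (i :: L) ((insert k J).erase b) * Gm i b =
          (Rr (k :: i :: L) (J.erase b) * Gm i b) * ((L.map fun a => Gm a k).sum - ∑ c ∈ J, Gm k c) +
          (Rr (k :: i :: L) (J.erase b) * Gm k b) * Gm i k := by
        intro b hb
        have hkb := hJ b hb
        rw [Finset.erase_insert_of_ne hkb.ne,
          ihJ _ (Finset.erase_ssubset hb) (fun c hc => hJ c (Finset.mem_of_mem_erase hc))]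
        rw [List.map_cons, List.sum_cons]
        have c1 : (L.map fun a => Gm a k).sum * Gm i b = Gm i b * (L.map fun a => Gm a k).sum := by
          have : ∀ L' : List (Fin N), (∀ a ∈ L', a ∈ L) → (L'.map fun a => Gm a k).sum * Gm i b = Gm i b * (L'.map fun a => Gm a k).sum := by
            intro L' hL2
            induction L' with
            | nil => simp
            | cons a L' ih =>
              have haL := hL2 a List.mem_cons_self
              have hak := hL' a haL
              rw [List.map_cons, List.sum_cons, add_mul, mul_add,
                ih (fun x hx => hL2 x (List.mem_cons_of_mem _ hx)),
                Gm_comm hak (hik.trans hkb) (fun h => hiL (h ▸ haL)) (hak.trans hkb).ne hik.ne' hkb.ne]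
          exact this L (fun _ h => h)
        have c2 : (∑ c ∈ J.erase b, Gm k c) * Gm i b = Gm i b * ∑ c ∈ J.erase b, Gm k c := by
          rw [Finset.sum_mul, Finset.mul_sum]
          refine Finset.sum_congr rfl fun c hc => ?_
          have hc' := Finset.mem_erase.1 hc
          exact Gm_comm (hJ c hc'.2) (hik.trans hkb) hik.ne' hkb.ne (hik.trans (hJ c hc'.2)).ne' hc'.1
        have c3 := Gm_rel hik hkb
        rw [← Finset.add_sum_erase J _ hb]
        set R := Rr (k :: i :: L) (J.erase b)
        set S := (L.map fun a => Gm a k).sum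
        set Z := ∑ c ∈ J.erase b, Gm k c
        calc R * (Gm i k + S - Z) * Gm i b = R * (Gm i k * Gm i b + S * Gm i b - Z * Gm i b) := by noncomm_ring
          _ = R * (Gm i b * S - Gm i b * Z - Gm i b * Gm k b + (Gm i b * Gm k b + Gm i k * Gm i b)) := by
              rw [c1, c2]; noncomm_ring
          _ = _ := by rw [← c3]; noncomm_ring
      rw [Finset.sum_congr rfl ebig, Finset.sum_add_distrib, ← Finset.sum_mul, ← Finset.sum_mul]
      have s1 : ∑ b ∈ J, Rr (k :: i :: L) (J.erase b) * Gm k b = Rr (k :: i :: L) J - Rr (i :: L) J := by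
        rw [Rr_cons k (i :: L) J]; abel
      have s2 : ∑ b ∈ J, Rr (k :: i :: L) (J.erase b) * Gm i b = Rr (k :: i :: L) J - Rr (k :: L) J := by
        have hiJ : ∀ b ∈ J, i < b := fun b hb => hik.trans (hJ b hb)
        rw [Rr_swap k i L J hik.ne' hJ hiJ, Rr_cons i (k :: L) J]
        rw [add_sub_cancel_left]
        refine Finset.sum_congr rfl fun b _ => ?_
        rw [Rr_swap k i L _ hik.ne' (fun c hc => hJ c (Finset.mem_of_mem_erase hc))
          (fun c hc => hiJ c (Finset.mem_of_mem_erase hc))]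
      rw [s1, s2, List.map_cons, List.sum_cons]
      noncomm_ring


/-- list of centres -/
def Lc (N : ℕ) : ℕ → List (Fin N)
  | 0 => []
  | k + 1 => if h : k < N then ⟨k, h⟩ :: Lc N k else Lc N k

theorem Lc_succ {N k : ℕ} (h : k < N) : Lc N (k + 1) = ⟨k, h⟩ :: Lc N k := by
  simp [Lc, h]

theorem mem_Lc {N : ℕ} (k : ℕ) (a : Fin N) : a ∈ Lc N k ↔ a.val < k := by
  induction k with
  | zero => simp [Lc]
  | succ k ih =>
    by_cases h : k < N
    · rw [Lc_succ h, List.mem_cons, ih, Fin.ext_iff]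
      simp only; omega
    · have := a.isLt
      simp only [Lc, dif_neg h, ih]; omega

theorem nodup_Lc {N : ℕ} (k : ℕ) : (Lc N k).Nodup := by
  induction k with
  | zero => simp [Lc]
  | succ k ih =>
    by_cases h : k < N
    · rw [Lc_succ h, List.nodup_cons, mem_Lc]
      exact ⟨by simp, ih⟩
    · simpa only [Lc, dif_neg h] using ih

/-- leaves -/
def Uk (N k : ℕ) : Finset (Fin N) := Finset.univ.filter fun b => k ≤ b.val

theorem mem_Uk {N k : ℕ} (b : Fin N) : b ∈ Uk N k ↔ k ≤ b.val := by simp [Uk]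

noncomputable def Mk (N k m : ℕ) : Matrix (Perm (Fin N)) (Perm (Fin N)) ℤ :=
  ∑ J ∈ (Uk N k).powersetCard m, Rr (Lc N k) J

noncomputable def Yk {N : ℕ} (k : Fin N) : Matrix (Perm (Fin N)) (Perm (Fin N)) ℤ :=
  ((Lc N k.val).map fun a => Gm a k).sum - ∑ c ∈ Uk N (k.val + 1), Gm k c

theorem sum_double {N : ℕ} {A : Type*} [Ring A] (U : Finset (Fin N)) (m : ℕ) (F : Finset (Fin N) → A) (g : Fin N → A) :
    ∑ J ∈ U.powersetCard (m + 1), ∑ b ∈ J, F (J.erase b) * g b =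
    ∑ J ∈ U.powersetCard m, ∑ c ∈ U \ J, F J * g c := by
  rw [Finset.sum_sigma', Finset.sum_sigma']
  apply Finset.sum_nbij' (fun p => ⟨p.1.erase p.2, p.2⟩) (fun p => ⟨insert p.2 p.1, p.2⟩)
  · rintro ⟨J, b⟩ hp
    simp only [Finset.mem_sigma, Finset.mem_powersetCard, Finset.mem_sdiff] at *
    refine ⟨⟨(Finset.erase_subset _ _).trans hp.1.1, ?_⟩, hp.1.1 hp.2, Finset.notMem_erase _ _⟩
    rw [Finset.card_erase_of_mem hp.2, hp.1.2]; rfl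
  · rintro ⟨J, b⟩ hp
    simp only [Finset.mem_sigma, Finset.mem_powersetCard, Finset.mem_sdiff] at *
    refine ⟨⟨Finset.insert_subset hp.2.1 hp.1.1, ?_⟩, Finset.mem_insert_self _ _⟩
    rw [Finset.card_insert_of_notMem hp.2.2, hp.1.2]
  · rintro ⟨J, b⟩ hp
    simp only [Finset.mem_sigma] at hp
    simp [Finset.insert_erase hp.2]
  · rintro ⟨J, b⟩ hp
    simp only [Finset.mem_sigma, Finset.mem_sdiff] at hp
    simp [Finset.erase_insert hp.2.2]
  · rintro ⟨J, b⟩ hp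
    rfl

theorem Mk_step {N : ℕ} (k : Fin N) (m : ℕ) :
    Mk N k.val (m + 1) = Mk N (k.val + 1) (m + 1) + Mk N (k.val + 1) m * Yk k := by
  have hU : Uk N k.val = insert k (Uk N (k.val + 1)) := by
    ext b
    rw [Finset.mem_insert, mem_Uk, mem_Uk, Fin.ext_iff]; omega
  have hkU : k ∉ Uk N (k.val + 1) := by rw [mem_Uk]; omega
  have hJk : ∀ m, ∀ J ∈ (Uk N (k.val + 1)).powersetCard m, k ∉ J := fun m J hJ h =>
    hkU ((Finset.mem_powersetCard.1 hJ).1 h)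
  have hL : Lc N (k.val + 1) = k :: Lc N k.val := Lc_succ k.isLt
  unfold Mk
  rw [hU, Finset.powersetCard_succ_insert hkU, Finset.sum_union, Finset.sum_image]
  · have e1 : ∀ J ∈ (Uk N (k.val + 1)).powersetCard (m + 1), Rr (Lc N k.val) J =
        Rr (Lc N (k.val + 1)) J - ∑ b ∈ J, Rr (Lc N (k.val + 1)) (J.erase b) * Gm k b := by
      intro J _
      rw [hL, Rr_cons k _ J]; abel
    have e2 : ∀ J ∈ (Uk N (k.val + 1)).powersetCard m, Rr (Lc N k.val) (insert k J) =
        Rr (Lc N (k.val + 1)) J * Yk k + ∑ c ∈ Uk N (k.val + 1) \ J, Rr (Lc N (k.val + 1)) J * Gm k c := by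
      intro J hJ
      have hJU := (Finset.mem_powersetCard.1 hJ).1
      rw [hL, Rr_key k _ (fun a ha => (mem_Lc _ _).1 ha) (nodup_Lc _) J
        (fun b hb => (mem_Uk _).1 (hJU hb)), ← Finset.mul_sum, ← mul_add, Yk,
        ← Finset.sum_sdiff hJU]
      congr 1
      abel
    rw [Finset.sum_congr rfl e1, Finset.sum_congr rfl e2, Finset.sum_sub_distrib, Finset.sum_add_distrib,
      sum_double, Finset.sum_mul]
    abel
  · intro J1 h1 J2 h2 h
    have := congrArg (fun K => Finset.erase K k) h
    simpa [Finset.erase_insert (hJk m J1 h1), Finset.erase_insert (hJk m J2 h2)] using this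
  · rw [Finset.disjoint_left]
    intro J h1 h2
    obtain ⟨K, _, rfl⟩ := Finset.mem_image.1 h2
    exact hJk _ _ h1 (Finset.mem_insert_self _ _)

theorem Rr_empty {N : ℕ} (L : List (Fin N)) : Rr L ∅ = 1 := by
  induction L with
  | nil => simp [Rr]
  | cons i L ih => rw [Rr_cons, Finset.sum_empty, add_zero, ih]

theorem Mk_zero (N k : ℕ) : Mk N k 0 = 1 := by
  simp [Mk, Rr_empty]

theorem Mk_N (N m : ℕ) : Mk N N (m + 1) = 0 := by
  have : Uk N N = ∅ := by
    ext b
    have := b.isLt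
    rw [mem_Uk]; simp
  rw [Mk, this, Finset.powersetCard_eq_empty.2 (by simp), Finset.sum_empty]

/-- multiplication by `g` is represented by a matrix -/
def Rep {N : ℕ} [NeZero N] (g : MvPolynomial (Fin N) ℤ) (A : Matrix (Perm (Fin N)) (Perm (Fin N)) ℤ) : Prop :=
  ∀ f u, ph u (f * g) = ∑ v, ph v f * A v u

theorem Rep.add {N : ℕ} [NeZero N] {g h : MvPolynomial (Fin N) ℤ} {A B : Matrix (Perm (Fin N)) (Perm (Fin N)) ℤ}
    (h1 : Rep g A) (h2 : Rep h B) : Rep (g + h) (A + B) := by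
  intro f u
  rw [mul_add, map_add, h1, h2, ← Finset.sum_add_distrib]
  simp only [Matrix.add_apply, mul_add]

theorem Rep.mul {N : ℕ} [NeZero N] {g h : MvPolynomial (Fin N) ℤ} {A B : Matrix (Perm (Fin N)) (Perm (Fin N)) ℤ}
    (h1 : Rep g A) (h2 : Rep h B) : Rep (g * h) (A * B) := by
  intro f u
  rw [← mul_assoc, h2]
  simp only [h1 _ _, Matrix.mul_apply, Finset.mul_sum, Finset.sum_mul]
  rw [Finset.sum_comm]
  simp only [mul_assoc]

theorem Rep.one {N : ℕ} [NeZero N] : Rep (1 : MvPolynomial (Fin N) ℤ) 1 := by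
  intro f u
  simp [Matrix.one_apply]

theorem Rep.zero {N : ℕ} [NeZero N] : Rep (0 : MvPolynomial (Fin N) ℤ) 0 := by
  intro f u
  simp

theorem Rep.neg {N : ℕ} [NeZero N] {g : MvPolynomial (Fin N) ℤ} {A : Matrix (Perm (Fin N)) (Perm (Fin N)) ℤ}
    (h1 : Rep g A) : Rep (-g) (-A) := by
  intro f u
  rw [mul_neg, map_neg, h1]
  simp

theorem Gm_symm {N : ℕ} (a b : Fin N) : Gm a b = Gm b a := by
  unfold Gm
  rw [swap_comm]

theorem list_sum_Lc {N : ℕ} {A : Type*} [AddCommMonoid A] (k : ℕ) (f : Fin N → A) :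
    ((Lc N k).map f).sum = ∑ a ∈ Finset.univ.filter (fun a : Fin N => a.val < k), f a := by
  rw [← List.sum_toFinset f (nodup_Lc k)]
  congr 1
  ext a
  simp [mem_Lc]

theorem Rep.X {N : ℕ} [NeZero N] (k : Fin N) : Rep (X k) (- Yk k) := by
  intro f u
  rw [mul_comm, ph_monk]
  have e1 : - Yk k = ∑ b, sg k b • Gm k b := by
    rw [Yk, list_sum_Lc, Uk, neg_sub, Finset.sum_filter, Finset.sum_filter, ← Finset.sum_sub_distrib]
    refine Finset.sum_congr rfl fun b _ => ?_
    rw [Gm_symm b k]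
    rcases lt_trichotomy k b with h | h | h
    · have h1 : k.val + 1 ≤ b.val := h
      have h2 : ¬ b.val < k.val := by omega
      simp [sg, h, h1, h2]
    · subst h
      simp [sg]
    · have h1 : ¬ k.val + 1 ≤ b.val := by have : b.val < k.val := h; omega
      have h2 : b.val < k.val := h
      simp [sg, h, h1, h2, h.asymm]
  rw [e1]
  have e2 : ∀ v, ph v f * (∑ b, sg k b • Gm k b : Matrix (Perm (Fin N)) (Perm (Fin N)) ℤ) v u =
      ∑ b, sg k b * (ph v f * Gm k b v u) := by
    intro v
    rw [Matrix.sum_apply, Finset.mul_sum]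
    refine Finset.sum_congr rfl fun b _ => ?_
    rw [Matrix.smul_apply, smul_eq_mul]; ring
  rw [Finset.sum_congr rfl fun v _ => e2 v, Finset.sum_comm]
  refine Finset.sum_congr rfl fun b _ => ?_
  rw [← Finset.mul_sum]
  congr 1
  have := mul_Gm (Matrix.of fun _ v => ph v f : Matrix (Perm (Fin N)) (Perm (Fin N)) ℤ) k b 1 u
  rw [Matrix.mul_apply] at this
  simp only [Matrix.of_apply] at this
  rw [this]
  simp only [eq_comm]

theorem Rep.exists {N : ℕ} [NeZero N] (g : MvPolynomial (Fin N) ℤ) : ∃ A, Rep g A := by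
  induction g using MvPolynomial.induction_on with
  | C a =>
    refine ⟨a • 1, fun f u => ?_⟩
    have : f * C a = a • f := by rw [mul_comm, MvPolynomial.C_mul']
    rw [this, map_zsmul]
    simp [Matrix.one_apply, Matrix.smul_apply, mul_comm]
  | add p q h1 h2 =>
    obtain ⟨A, hA⟩ := h1
    obtain ⟨B, hB⟩ := h2
    exact ⟨_, hA.add hB⟩
  | mul_X p i h =>
    obtain ⟨A, hA⟩ := h
    exact ⟨_, hA.mul (Rep.X i)⟩

theorem Mk_rep {N : ℕ} [NeZero N] (d k : ℕ) (hk : k + d = N) (m : ℕ) : ∃ g, Rep g (Mk N k m) := by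
  induction d generalizing k m with
  | zero =>
    rw [add_zero] at hk
    subst hk
    cases m with
    | zero => exact ⟨1, by rw [Mk_zero]; exact Rep.one⟩
    | succ m => exact ⟨0, by rw [Mk_N]; exact Rep.zero⟩
  | succ d ih =>
    cases m with
    | zero => exact ⟨1, by rw [Mk_zero]; exact Rep.one⟩
    | succ m =>
      obtain ⟨g1, h1⟩ := ih (k + 1) (by omega) (m + 1)
      obtain ⟨g2, h2⟩ := ih (k + 1) (by omega) m
      have := Mk_step (⟨k, by omega⟩ : Fin N) m
      simp only at this
      refine ⟨g1 + g2 * (- X ⟨k, by omega⟩), ?_⟩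
      rw [this]
      have h3 := (Rep.X (⟨k, by omega⟩ : Fin N)).neg
      rw [neg_neg] at h3
      exact h1.add (h2.mul h3)

/-- final algebraic reduction -/
theorem main_reduction {N : ℕ} [NeZero N] (k m : ℕ) (hk : k ≤ N) (r : Perm (Fin N))
    (hr : ∀ u, Mk N k m 1 u = if u = r then 1 else 0) (w w' : Perm (Fin N)) (c : Perm (Fin N) → ℤ)
    (hc : SS N w * SS N r = ∑ u, c u • SS N u) : c w' = Mk N k m w w' := by
  have h1 : schubertPoly N w * schubertPoly N r - ∑ u, c u • schubertPoly N u ∈ symIdeal N := by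
    rw [← Ideal.Quotient.eq, map_mul, map_sum]
    simp only [map_zsmul]
    exact hc
  have h2 := ph_symIdeal w' _ h1
  rw [map_sub, map_sum] at h2
  simp only [map_zsmul, ph_schubert, smul_eq_mul, mul_ite, mul_one, mul_zero] at h2
  rw [Finset.sum_ite_eq] at h2
  simp only [Finset.mem_univ, if_true] at h2
  obtain ⟨g, hg⟩ := Mk_rep (N := N) (N - k) k (by omega) m
  have h3 : ∀ u, ph u g = ph u (schubertPoly N r) := by
    intro u
    rw [← one_mul g, hg, ph_schubert, ← hr u]
    simp [ph_one]
  obtain ⟨A, hA⟩ := Rep.exists (schubertPoly N w)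
  have h4 : ph w' (schubertPoly N w * schubertPoly N r) = Mk N k m w w' := by
    rw [mul_comm, hA]
    simp only [← h3]
    rw [← hA, mul_comm, hg]
    simp [ph_schubert]
  rw [h4] at h2
  linarith


/-- saturated chains from `w` with centres satisfying `C` and the (distinct) leaves forming the set `J` -/
inductive PCh {N : ℕ} (C : Fin N → Prop) (w : Perm (Fin N)) : Finset (Fin N) → Perm (Fin N) → Prop
  | nil : PCh C w ∅ w
  | snoc (J : Finset (Fin N)) (u : Perm (Fin N)) (a b : Fin N) : PCh C w J u → C a → b ∉ J →
      len (u * swap a b) = len u + 1 → PCh C w (insert b J) (u * swap a b)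

theorem PCh.mono {N : ℕ} {C D : Fin N → Prop} (hCD : ∀ a, C a → D a) {w : Perm (Fin N)} {J : Finset (Fin N)}
    {u : Perm (Fin N)} (h : PCh C w J u) : PCh D w J u := by
  induction h with
  | nil => exact PCh.nil
  | snoc J u a b _ h2 h3 h4 ih => exact PCh.snoc J u a b ih (hCD _ h2) h3 h4

theorem PCh.fix {N : ℕ} {C : Fin N → Prop} {w : Perm (Fin N)} {J : Finset (Fin N)}
    {u : Perm (Fin N)} (h : PCh C w J u) (p : Fin N) (hp : p ∉ J) (hC : ¬ C p) : u p = w p := by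
  induction h with
  | nil => rfl
  | snoc J u a b _ h2 h3 h4 ih =>
    rw [Finset.mem_insert, not_or] at hp
    rw [Perm.mul_apply, swap_apply_of_ne_of_ne _ hp.1, ih hp.2]
    rintro rfl; exact hC h2

theorem PCh.lt {N : ℕ} {C : Fin N → Prop} {w : Perm (Fin N)} {J : Finset (Fin N)}
    {u : Perm (Fin N)} (h : PCh C w J u) (hCJ : ∀ a, C a → ∀ b ∈ J, a < b) (p : Fin N) (hp : p ∈ J) :
    u p < w p := by
  induction h with
  | nil => simp at hp
  | snoc J u a b h1 h2 h3 h4 ih =>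
    have hCJ' : ∀ a, C a → ∀ b ∈ J, a < b := fun a ha c hc => hCJ a ha c (Finset.mem_insert_of_mem hc)
    rw [Finset.mem_insert] at hp
    have hab : a < b := hCJ a h2 b (Finset.mem_insert_self _ _)
    have hcov := ((cov_iff u hab).1 h4).1
    rcases eq_or_ne p b with rfl | hpb
    · rw [Perm.mul_apply, swap_apply_right]
      rw [← h1.fix p h3 (fun hc => lt_irrefl _ (hCJ p hc p (Finset.mem_insert_self _ _)))]
      exact hcov
    · have hpJ := hp.resolve_left hpb
      have hpa := hCJ' a h2 p hpJ
      rw [Perm.mul_apply, swap_apply_of_ne_of_ne hpa.ne' hpb]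
      exact ih hCJ' hpJ

theorem PCh.det {N : ℕ} {C : Fin N → Prop} {w : Perm (Fin N)} {J K : Finset (Fin N)}
    {u : Perm (Fin N)} (h : PCh C w J u) (h' : PCh C w K u) (hCJ : ∀ a, C a → ∀ b ∈ J, a < b)
    (hCK : ∀ a, C a → ∀ b ∈ K, a < b) : J = K := by
  ext p
  constructor
  · intro hp
    by_contra hn
    have h1 := h.lt hCJ p hp
    have h2 := h'.fix p hn (fun hc => lt_irrefl _ (hCJ p hc p hp))
    exact h1.ne h2
  · intro hp
    by_contra hn
    have h1 := h'.lt hCK p hp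
    have h2 := h.fix p hn (fun hc => lt_irrefl _ (hCK p hc p hp))
    exact h1.ne h2

theorem PCh.split {N : ℕ} {i : Fin N} {L : List (Fin N)} {w : Perm (Fin N)} {J : Finset (Fin N)}
    {u : Perm (Fin N)} (h : PCh (fun a => a ∈ i :: L) w J u) (hCJ : ∀ a ∈ i :: L, ∀ b ∈ J, a < b) :
    PCh (fun a => a ∈ L) w J u ∨ ∃ b ∈ J, len u = len (u * swap i b) + 1 ∧
      PCh (fun a => a ∈ i :: L) w (J.erase b) (u * swap i b) := by
  induction h with
  | nil => exact Or.inl PCh.nil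
  | snoc J u a b h1 h2 h3 h4 ih =>
    have hCJ' : ∀ a ∈ i :: L, ∀ b ∈ J, a < b := fun a ha c hc => hCJ a ha c (Finset.mem_insert_of_mem hc)
    have hab : a < b := hCJ a h2 b (Finset.mem_insert_self _ _)
    by_cases hai : a = i
    · subst hai
      refine Or.inr ⟨b, Finset.mem_insert_self _ _, ?_, ?_⟩
      · rw [mul_assoc, swap_mul_self, mul_one, h4]
      · rw [mul_assoc, swap_mul_self, mul_one, Finset.erase_insert h3]
        exact h1
    · have haL : a ∈ L := (List.mem_cons.1 h2).resolve_left hai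
      rcases ih hCJ' with h | ⟨c, hc, hl, hP⟩
      · exact Or.inl (PCh.snoc J u a b h haL h3 h4)
      · right
        have hcb : c ≠ b := fun h => h3 (h ▸ hc)
        have hic := hCJ' i List.mem_cons_self c hc
        have hac := hCJ' a h2 c hc
        have hib := hCJ i List.mem_cons_self b (Finset.mem_insert_self _ _)
        have hcomm := swap_comm_disj hab.ne hic.ne hai hac.ne hib.ne' hcb.symm
        have hv : u * swap i c * swap i c = u := by rw [mul_assoc, swap_mul_self, mul_one]
        have k1 : Cov (u * swap i c) i c := (cov_iff _ hic).1 (by rw [hv]; exact hl)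
        have k2 : Cov (u * swap i c * swap i c) a b := (cov_iff _ hab).1 (by rw [hv]; exact h4)
        obtain ⟨k3, k4⟩ := cov_comm_aux hic hab (Ne.symm hai) hib.ne hac.ne' hcb _ k1 k2
        have l3 := (cov_iff _ hab).2 k3
        have l4 := (cov_iff _ hic).2 k4
        have e1 : u * swap a b * swap i c = u * swap i c * swap a b := by
          rw [mul_assoc, hcomm, mul_assoc]
        refine ⟨c, Finset.mem_insert_of_mem hc, ?_, ?_⟩
        · rw [e1, ← l4, ← e1, mul_assoc (u * swap a b), swap_mul_self, mul_one]
        · rw [e1, Finset.erase_insert_of_ne hcb.symm]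
          exact PCh.snoc _ _ a b hP h2 (fun h => h3 (Finset.mem_of_mem_erase h)) l3

theorem ind_sum {α : Type*} (J : Finset α) (p : Prop) (q : α → Prop) [Decidable p] [DecidablePred q] (h1 : ∀ b ∈ J, p → q b → False)
    (h2 : ∀ b ∈ J, ∀ c ∈ J, q b → q c → b = c) :
    ((if p then 1 else 0 : ℤ) + ∑ b ∈ J, if q b then 1 else 0) = if p ∨ ∃ b ∈ J, q b then 1 else 0 := by
  by_cases hq : ∃ b ∈ J, q b
  · obtain ⟨b, hb, hqb⟩ := hq
    have hp : ¬ p := fun hp => h1 b hb hp hqb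
    rw [if_neg hp, if_pos (Or.inr ⟨b, hb, hqb⟩), Finset.sum_eq_single_of_mem b hb, if_pos hqb, zero_add]
    intro c hc hcb
    exact if_neg fun hqc => hcb (h2 c hc b hb hqc hqb)
  · rw [Finset.sum_eq_zero, add_zero]
    · simp [hq]
    · intro b hb
      exact if_neg fun h => hq ⟨b, hb, h⟩

theorem Rr_eq {N : ℕ} (L : List (Fin N)) (hnd : L.Nodup) (J : Finset (Fin N))
    (hLJ : ∀ a ∈ L, ∀ b ∈ J, a < b) (w u : Perm (Fin N)) :
    Rr L J w u = if PCh (fun a => a ∈ L) w J u then 1 else 0 := by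
  induction L generalizing J u with
  | nil =>
    have hiff : PCh (fun a => a ∈ ([] : List (Fin N))) w J u ↔ J = ∅ ∧ w = u := by
      constructor
      · intro h
        cases h with
        | nil => exact ⟨rfl, rfl⟩
        | snoc J u a b _ h2 => simp at h2
      · rintro ⟨rfl, rfl⟩; exact PCh.nil
    simp only [hiff]
    by_cases hJ : J = ∅
    · simp [Rr, hJ, Matrix.one_apply]
    · simp [Rr, hJ]
  | cons i L ihL =>
    have hiL : i ∉ L := hnd.notMem
    induction J using Finset.strongInduction generalizing u with
    | H J ihJ =>
      have hLJ' : ∀ a ∈ L, ∀ b ∈ J, a < b := fun a ha => hLJ a (List.mem_cons_of_mem _ ha)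
      have hiJ := hLJ i List.mem_cons_self
      rw [Rr_cons, Matrix.add_apply, Matrix.sum_apply, ihL hnd.of_cons J hLJ']
      have e : ∀ b ∈ J, (Rr (i :: L) (J.erase b) * Gm i b) w u =
          if len u = len (u * swap i b) + 1 ∧ PCh (fun a => a ∈ i :: L) w (J.erase b) (u * swap i b) then 1 else 0 := by
        intro b hb
        rw [mul_Gm, ihJ _ (Finset.erase_ssubset hb) (fun a ha c hc => hLJ a ha c (Finset.mem_of_mem_erase hc)),
          ite_and]
      rw [Finset.sum_congr rfl e]
      have hval : ∀ b ∈ J, PCh (fun a => a ∈ i :: L) w (J.erase b) (u * swap i b) → u i = w b := by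
        intro b hb h
        have := h.fix b (Finset.notMem_erase _ _) (fun hc => lt_irrefl _ (hLJ b hc b hb))
        simpa using this
      rw [ind_sum J (PCh (fun a => a ∈ L) w J u) (fun b => len u = len (u * swap i b) + 1 ∧
        PCh (fun a => a ∈ i :: L) w (J.erase b) (u * swap i b))]
      · congr 1
        apply propext
        constructor
        · rintro (h | ⟨b, hb, hl, h⟩)
          · exact h.mono fun a ha => List.mem_cons_of_mem _ ha
          · have := PCh.snoc _ _ i b h List.mem_cons_self (Finset.notMem_erase _ _)
              (by rw [mul_assoc, swap_mul_self, mul_one]; exact hl)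
            rwa [Finset.insert_erase hb, mul_assoc, swap_mul_self, mul_one] at this
        · intro h
          exact h.split hLJ
      · rintro b hb hp ⟨_, hq⟩
        have h1 := hval b hb hq
        have h2 := hp.fix i (fun h => lt_irrefl _ (hiJ i h)) hiL
        exact (hiJ b hb).ne (w.injective (h2.symm.trans h1))
      · rintro b hb c hc ⟨_, hq⟩ ⟨_, hq'⟩
        exact w.injective ((hval b hb hq).symm.trans (hval c hc hq'))

theorem Mk_eq {N : ℕ} (k m : ℕ) (w u : Perm (Fin N)) :
    Mk N k m w u = if ∃ J ∈ (Uk N k).powersetCard m, PCh (fun a => a.val < k) w J u then 1 else 0 := by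
  have hsub : ∀ J ∈ (Uk N k).powersetCard m, ∀ a : Fin N, a.val < k → ∀ b ∈ J, a < b := by
    intro J hJ a ha b hb
    have := (mem_Uk b).1 ((Finset.mem_powersetCard.1 hJ).1 hb)
    rw [Fin.lt_def]; omega
  rw [Mk, Matrix.sum_apply]
  have e : ∀ J ∈ (Uk N k).powersetCard m, Rr (Lc N k) J w u =
      if PCh (fun a => a.val < k) w J u then 1 else 0 := by
    intro J hJ
    rw [Rr_eq _ (nodup_Lc k) J (fun a ha => hsub J hJ a ((mem_Lc k a).1 ha))]
    simp only [mem_Lc]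
  rw [Finset.sum_congr rfl e]
  have := ind_sum ((Uk N k).powersetCard m) False (fun J => PCh (fun a => a.val < k) w J u) (by simp)
    (fun J hJ K hK h1 h2 => h1.det h2 (hsub J hJ) (hsub K hK))
  simpa using this

theorem tProd_succ {N : ℕ} [NeZero N] (a b : ℕ → ℕ) (i : ℕ) :
    tProd N a b (i + 1) = tProd N a b i * t N (a i) (b i) := by
  simp [tProd, List.range_succ]

theorem tProd_congr {N : ℕ} [NeZero N] (a b a' b' : ℕ → ℕ) (i : ℕ) (h : ∀ j < i, a j = a' j ∧ b j = b' j) :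
    tProd N a b i = tProd N a' b' i := by
  induction i with
  | zero => rfl
  | succ i ih =>
    rw [tProd_succ, tProd_succ, ih (fun j hj => h j (by omega)), (h i (by omega)).1, (h i (by omega)).2]

theorem pos_val {N : ℕ} [NeZero N] (j : ℕ) (h1 : 1 ≤ j) (h2 : j ≤ N) : (pos N j).val + 1 = j := by
  simp only [pos]
  rw [Nat.mod_eq_of_lt (by omega)]; omega

theorem RelR_iff {N : ℕ} [NeZero N] (k m : ℕ) (w u : Perm (Fin N)) :
    RelR N k m w u ↔ ∃ J ∈ (Uk N k).powersetCard m, PCh (fun a => a.val < k) w J u := by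
  constructor
  · rintro ⟨a, b, ⟨hab, hlen⟩, rfl, hd⟩
    have key : ∀ i ≤ m, ∃ J ∈ (Uk N k).powersetCard i, PCh (fun a => a.val < k) w J (w * tProd N a b i) ∧
        ∀ x ∈ J, ∃ j < i, x = pos N (b j) := by
      intro i hi
      induction i with
      | zero => exact ⟨∅, by simp, by simpa [tProd] using PCh.nil, by simp⟩
      | succ i ih =>
        obtain ⟨J, hJ, hP, hx⟩ := ih (by omega)
        obtain ⟨h1, h2, h3, h4⟩ := hab i (by omega)
        have pa := pos_val (N := N) (a i) h1 (by omega)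
        have pb := pos_val (N := N) (b i) (by omega) h4
        rw [Finset.mem_powersetCard] at hJ
        have hb : pos N (b i) ∉ J := by
          intro h
          obtain ⟨j, hj, e⟩ := hx _ h
          obtain ⟨h1', h2', h3', h4'⟩ := hab j (by omega)
          have pb' := pos_val (N := N) (b j) (by omega) h4'
          have := hd i j (by omega) (by omega) (by omega)
          rw [e] at pb
          omega
        refine ⟨insert (pos N (b i)) J, ?_, ?_, ?_⟩
        · rw [Finset.mem_powersetCard, Finset.card_insert_of_notMem hb, hJ.2]
          exact ⟨Finset.insert_subset ((mem_Uk _).2 (by omega)) hJ.1, rfl⟩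
        · rw [tProd_succ, ← mul_assoc]
          refine PCh.snoc J _ (pos N (a i)) (pos N (b i)) hP (by omega) hb ?_
          have l1 := hlen i (by omega)
          have l2 := hlen (i + 1) hi
          rw [tProd_succ, ← mul_assoc] at l2
          rw [l1]
          exact l2
        · intro x hxm
          rcases Finset.mem_insert.1 hxm with h | h
          · exact ⟨i, by omega, h⟩
          · obtain ⟨j, hj, e⟩ := hx x h
            exact ⟨j, by omega, e⟩
    obtain ⟨J, hJ, hP, _⟩ := key m le_rfl
    exact ⟨J, hJ, hP⟩
  · rintro ⟨J, hJ, hP⟩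
    rw [Finset.mem_powersetCard] at hJ
    obtain ⟨hJU, rfl⟩ := hJ
    have key : ∃ a b : ℕ → ℕ, StepOK N k J.card w a b ∧ u = w * tProd N a b J.card ∧
        (∀ i j, i < J.card → j < J.card → i ≠ j → b i ≠ b j) ∧ ∀ i < J.card, pos N (b i) ∈ J := by
      induction hP with
      | nil =>
        refine ⟨fun _ => 0, fun _ => 0, ⟨by simp, ?_⟩, by simp [tProd], by simp, by simp⟩
        intro i hi
        have : i = 0 := by simpa using hi
        subst this
        simp [tProd]
      | snoc J u p q hP hp hq hl ih =>
        obtain ⟨a, b, ⟨h1, h2⟩, rfl, h3, h4⟩ := ih (fun x hx => hJU (Finset.mem_insert_of_mem hx))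
        have hqk := (mem_Uk _).1 (hJU (Finset.mem_insert_self q J))
        rw [Finset.card_insert_of_notMem hq]
        set m := J.card with hm
        let a' := Function.update a m (p.val + 1)
        let b' := Function.update b m (q.val + 1)
        have ea : ∀ j, j ≠ m → a' j = a j := fun j hj => Function.update_of_ne hj _ _
        have eb : ∀ j, j ≠ m → b' j = b j := fun j hj => Function.update_of_ne hj _ _
        have ea' : a' m = p.val + 1 := Function.update_self _ _ _
        have eb' : b' m = q.val + 1 := Function.update_self _ _ _
        have et : ∀ i ≤ m, tProd N a' b' i = tProd N a b i := fun i hi =>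
          tProd_congr _ _ _ _ _ fun j hj => ⟨ea j (by omega), eb j (by omega)⟩
        have et' : tProd N a' b' (m + 1) = tProd N a b m * swap p q := by
          rw [tProd_succ, et m le_rfl, ea', eb', t, pos_succ, pos_succ]
        have hqb : ∀ i < m, b i ≠ q.val + 1 := by
          intro i hi e
          have := h4 i hi
          rw [e, pos_succ] at this
          exact hq this
        refine ⟨a', b', ⟨?_, ?_⟩, ?_, ?_, ?_⟩
        · intro i hi
          by_cases him : i = m
          · subst him
            rw [ea', eb']
            have := q.isLt
            have hp' : p.val < k := hp
            omega
          · rw [ea i him, eb i him]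
            exact h1 i (by omega)
        · intro i hi
          by_cases him : i = m + 1
          · rw [him, et', ← mul_assoc, hl, h2 m le_rfl]; rfl
          · rw [et i (by omega)]
            exact h2 i (by omega)
        · rw [et', mul_assoc]
        · intro i j hi hj hij
          by_cases him : i = m
          · rw [him, eb', eb j (by omega)]
            exact (hqb j (by omega)).symm
          · by_cases hjm : j = m
            · rw [hjm, eb', eb i him]
              exact hqb i (by omega)
            · rw [eb i him, eb j hjm]
              exact h3 i j (by omega) (by omega) hij
        · intro i hi
          by_cases him : i = m
          · rw [him, eb', pos_succ]; exact Finset.mem_insert_self _ _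
          · rw [eb i him]
            exact Finset.mem_insert_of_mem (h4 i (by omega))
    obtain ⟨a, b, h1, h2, h3, _⟩ := key
    exact ⟨a, b, h1, h2, h3⟩

theorem rPerm_succ {N : ℕ} [NeZero N] (k j : ℕ) : rPerm N k (j + 1) = rPerm N k j * t N k (k + 1 + j) := by
  simp [rPerm, List.range_succ]

theorem rPerm_val {N : ℕ} [NeZero N] (k j : ℕ) (hk : 1 ≤ k) (hj : k + j ≤ N) (p : Fin N) :
    (p.val + 1 = k → (rPerm N k j p).val = p.val + j) ∧
    (k ≤ p.val → p.val < k + j → (rPerm N k j p).val + 1 = p.val) ∧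
    ((p.val + 1 < k ∨ k + j ≤ p.val) → (rPerm N k j p).val = p.val) := by
  induction j generalizing p with
  | zero => simp [rPerm]
  | succ j ih =>
    have pa := pos_val (N := N) k hk (by omega)
    have pb := pos_val (N := N) (k + 1 + j) (by omega) (by omega)
    have ia := ih (by omega) (pos N k)
    have ib := ih (by omega) (pos N (k + 1 + j))
    have ip := ih (by omega) p
    rw [rPerm_succ, Perm.mul_apply, t]
    by_cases h1 : p = pos N k
    · rw [h1, swap_apply_left]
      omega
    · by_cases h2 : p = pos N (k + 1 + j)
      · rw [h2, swap_apply_right]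
        omega
      · rw [swap_apply_of_ne_of_ne h1 h2]
        rw [Fin.ext_iff] at h1 h2
        omega

theorem PCh_rPerm {N : ℕ} [NeZero N] (k j : ℕ) (hk : 1 ≤ k) (hj : k + j ≤ N) :
    ∃ J ∈ (Uk N k).powersetCard j, PCh (fun a => a.val < k) 1 J (rPerm N k j) ∧ ∀ x ∈ J, x.val < k + j := by
  induction j with
  | zero => exact ⟨∅, by simp, by simpa [rPerm] using PCh.nil, by simp⟩
  | succ j ih =>
    obtain ⟨J, hJ, hP, hx⟩ := ih (by omega)
    rw [Finset.mem_powersetCard] at hJ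
    have pa := pos_val (N := N) k hk (by omega)
    have pb := pos_val (N := N) (k + 1 + j) (by omega) (by omega)
    have hb : pos N (k + 1 + j) ∉ J := fun h => by have := hx _ h; omega
    have hlt : pos N k < pos N (k + 1 + j) := by rw [Fin.lt_def]; omega
    refine ⟨insert (pos N (k + 1 + j)) J, ?_, ?_, ?_⟩
    · rw [Finset.mem_powersetCard, Finset.card_insert_of_notMem hb, hJ.2]
      exact ⟨Finset.insert_subset ((mem_Uk _).2 (by omega)) hJ.1, rfl⟩
    · rw [rPerm_succ, t]
      refine PCh.snoc J _ _ _ hP (by omega) hb ?_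
      rw [cov_iff _ hlt]
      have ia := (rPerm_val k j hk (by omega) (pos N k)).1 pa
      have ib := (rPerm_val k j hk (by omega) (pos N (k + 1 + j))).2.2 (by omega)
      refine ⟨by rw [Fin.lt_def]; omega, fun i _ _ h1 h2 => ?_⟩
      rw [Fin.lt_def] at h1 h2
      omega
    · intro x hxm
      rcases Finset.mem_insert.1 hxm with h | h
      · rw [h]; omega
      · have := hx x h; omega

theorem PCh_one {N : ℕ} [NeZero N] (k : ℕ) (hk : 1 ≤ k) (hkN : k ≤ N) (J : Finset (Fin N)) (u : Perm (Fin N))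
    (h : PCh (fun a => a.val < k) 1 J u) (hJ : J ⊆ Uk N k) :
    k + J.card ≤ N ∧ u = rPerm N k J.card ∧ ∀ x : Fin N, k ≤ x.val → x.val < k + J.card → x ∈ J := by
  induction h with
  | nil => simp [rPerm, hkN]
  | snoc J u a b h1 h2 h3 h4 ih =>
    obtain ⟨i1, i2, i3⟩ := ih (fun x hx => hJ (Finset.mem_insert_of_mem hx))
    have hbk := (mem_Uk _).1 (hJ (Finset.mem_insert_self b J))
    rw [Finset.card_insert_of_notMem h3]
    have hb1 : k + J.card ≤ b.val := by
      by_contra hn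
      exact h3 (i3 b hbk (by omega))
    have hbN := b.isLt
    have ha : a.val < k := h2
    have hab : a < b := by rw [Fin.lt_def]; omega
    obtain ⟨c1, c2⟩ := (cov_iff u hab).1 h4
    have va := rPerm_val k J.card hk i1 a
    have vb := (rPerm_val k J.card hk i1 b).2.2 (Or.inr hb1)
    rw [← i2] at va vb
    have hak : a.val + 1 = k := by
      by_contra hn
      have va' := va.2.2 (by omega)
      by_cases hj : J.card = 0
      · have vi := (rPerm_val k J.card hk i1 ⟨k - 1, by omega⟩).1 (by simp only; omega)
        rw [← i2] at vi
        simp only at vi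
        exact c2 ⟨k - 1, by omega⟩ (by rw [Fin.lt_def]; simp only; omega) (by rw [Fin.lt_def]; simp only; omega)
          (by rw [Fin.lt_def]; omega) (by rw [Fin.lt_def]; omega)
      · have vi := (rPerm_val k J.card hk i1 ⟨k, by omega⟩).2.1 (by simp only; omega) (by simp only; omega)
        rw [← i2] at vi
        simp only at vi
        exact c2 ⟨k, by omega⟩ (by rw [Fin.lt_def]; simp only; omega) (by rw [Fin.lt_def]; simp only; omega)
          (by rw [Fin.lt_def]; omega) (by rw [Fin.lt_def]; omega)
    have va' := va.1 hak
    have hbe : b.val = k + J.card := by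
      by_contra hn
      have vi := (rPerm_val k J.card hk i1 ⟨k + J.card, by omega⟩).2.2 (by simp only; omega)
      rw [← i2] at vi
      simp only at vi
      exact c2 ⟨k + J.card, by omega⟩ (by rw [Fin.lt_def]; simp only; omega) (by rw [Fin.lt_def]; simp only; omega)
          (by rw [Fin.lt_def]; omega) (by rw [Fin.lt_def]; omega)
    refine ⟨by omega, ?_, ?_⟩
    · rw [rPerm_succ, ← i2, t, ← hak, pos_succ]
      have : a.val + 1 + 1 + J.card = b.val + 1 := by omega
      rw [this, pos_succ]
    · intro x h5 h6
      by_cases hx : x.val < k + J.card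
      · exact Finset.mem_insert_of_mem (i3 x h5 hx)
      · have : x = b := by rw [Fin.ext_iff]; omega
        rw [this]; exact Finset.mem_insert_self _ _

theorem Mk_one {N : ℕ} [NeZero N] (k m : ℕ) (hk : 1 ≤ k) (hkm : k + m ≤ N) (u : Perm (Fin N)) :
    Mk N k m 1 u = if u = rPerm N k m then 1 else 0 := by
  rw [Mk_eq]
  congr 1
  apply propext
  constructor
  · rintro ⟨J, hJ, hP⟩
    rw [Finset.mem_powersetCard] at hJ
    have := (PCh_one k hk (by omega) J u hP hJ.1).2.1
    rwa [hJ.2] at this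
  · rintro rfl
    obtain ⟨J, hJ, hP, _⟩ := PCh_rPerm k m hk hkm
    exact ⟨J, hJ, hP⟩


/-- The structure constant `c^{w'}_{w, r[k,m]}` is `1` if `w →_{r[k,m]} w'` and `0`
otherwise.  The structure constants are encoded by their defining property:
any coefficient function `c` expressing `𝔖_w · 𝔖_{r[k,m]}` in the Schubert basis
of `Hₙ` satisfies the conclusion (here the paper's `n` is `n+1`). -/
theorem structure_constant_rPerm (n k m : ℕ) (hk : 1 ≤ k) (hm : 1 ≤ m)
    (hkm : k + m ≤ n + 1) (w w' : Equiv.Perm (Fin (n + 1)))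
    (c : Equiv.Perm (Fin (n + 1)) → ℤ)
    (hc : SS (n + 1) w * SS (n + 1) (rPerm (n + 1) k m) =
      ∑ u, c u • SS (n + 1) u) :
    c w' = if RelR (n + 1) k m w w' then 1 else 0 := by
  have h := main_reduction k m (by omega) (rPerm (n + 1) k m) (Mk_one k m hk hkm) w w' c hc
  rw [h, Mk_eq]
  simp only [RelR_iff]

end SchubertPieri
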